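/- arXiv:2604.21887 — 2 statements merged into one kernel-verified Lean document; each statement's English description precedes it below -/
import Mathlib

section
/- For every v ∈ H²₀(Ω) on a bounded open set Ω ⊂ ℝ², the gradient satisfies ‖∇v‖_{L⁴(Ω)} ≤ (|Ω|^{1/4}/π) ‖D²v‖_{L²(Ω)}. -/
open MeasureTheory

noncomputable section

/-- Partial derivative `∂f/∂xᵢ`. -/
def pd (f : EuclideanSpace ℝ (Fin 2) → ℝ) (i : Fin 2) (x : EuclideanSpace ℝ (Fin 2)) : ℝ :=
  fderiv ℝ f x (EuclideanSpace.single i 1)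

/-- Second partial derivative `∂²f/∂xᵢ∂xⱼ`. -/
def pd2 (f : EuclideanSpace ℝ (Fin 2) → ℝ) (i j : Fin 2) (x : EuclideanSpace ℝ (Fin 2)) : ℝ :=
  fderiv ℝ (fun y => pd f j y) x (EuclideanSpace.single i 1)

/-- `|∇f(x)|²`. -/
def grad2 (f : EuclideanSpace ℝ (Fin 2) → ℝ) (x : EuclideanSpace ℝ (Fin 2)) : ℝ :=
  ∑ i, (pd f i x) ^ 2

/-- `|D²f(x)|²` (squared Frobenius norm of the Hessian). -/
def hess2 (f : EuclideanSpace ℝ (Fin 2) → ℝ) (x : EuclideanSpace ℝ (Fin 2)) : ℝ :=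
  ∑ i, ∑ j, (pd2 f i j x) ^ 2

/-!
Talenti's inequality `π ‖u‖_{L⁴} ≤ ‖∇u‖_{L^{4/3}}` in the plane follows from mass transport, as in
Cordero-Erausquin, Nazaret and Villani. Given a positive `h` on a square `Q` with
`∫ u⁴ = ∫_Q h²`, the triangular Knothe map `T = (T₁, T₂)` carries `u⁴` to `h²`, so that
`∂₁T₁ ∂₂T₂ h(T)² = u⁴`. The arithmetic-geometric mean inequality gives
`u⁴ / h(T) ≤ u² (∂₁T₁ + ∂₂T₂) / 2`; integrating, and then by parts,
`∫_Q h ≤ -∫ u ∇u · T ≤ ‖∇u‖_{L^{4/3}} (∫ u⁴ |T|⁴)^{1/4} = ‖∇u‖_{L^{4/3}} (∫_Q h² |y|⁴)^{1/4}`.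
The choice `h = 1 / (1 + |y|⁴)`, for which `∫ h = π² / 2`, yields the sharp constant as `Q` grows.

Hölder's inequality on `Ω` turns the `L^{4/3}` norm of the gradient into the `L²` norm at the price
of `|Ω|^{1/4}`. Applying this to `∂₁v` and `∂₂v` and adding their squares, by the triangle
inequality for `|∇v|² = (∂₁v)² + (∂₂v)²` in `L²`, gives the theorem.
-/

open Set Filter Topology

/-! ### Monotone transport on the line -/

/-- The quantile function of the density `q` on `[c, ∞)`: the point `t` with
`∫ z in c..t, q z = m`. It is meaningful for `q` positive and for levels `m` that are attained. -/
def quantile (q : ℝ → ℝ) (c m : ℝ) : ℝ :=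
  Function.invFun (fun t ↦ ∫ z in c..t, q z) m

section Quantile

variable {q : ℝ → ℝ} {c d m : ℝ}

lemma hasStrictDerivAt_primitive (hq : Continuous q) (c t : ℝ) :
    HasStrictDerivAt (fun t ↦ ∫ z in c..t, q z) (q t) t :=
  intervalIntegral.integral_hasStrictDerivAt_right (hq.intervalIntegrable _ _)
    (hq.stronglyMeasurableAtFilter _ _) hq.continuousAt

lemma strictMono_primitive (hq : Continuous q) (hq₀ : ∀ t, 0 < q t) (c : ℝ) :
    StrictMono fun t ↦ ∫ z in c..t, q z :=
  strictMono_of_hasDerivAt_pos (fun t ↦ (hasStrictDerivAt_primitive hq c t).hasDerivAt) hq₀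

lemma exists_primitive_eq (hq : Continuous q) (hcd : c ≤ d)
    (hm : m ∈ Icc 0 (∫ z in c..d, q z)) : ∃ t ∈ Icc c d, ∫ z in c..t, q z = m := by
  have hcont : Continuous fun t ↦ ∫ z in c..t, q z :=
    intervalIntegral.continuous_primitive (fun _ _ ↦ hq.intervalIntegrable _ _) c
  apply intermediate_value_Icc hcd hcont.continuousOn
  simpa using hm

lemma quantile_primitive (hq : Continuous q) (hq₀ : ∀ t, 0 < q t) (c t : ℝ) :
    quantile q c (∫ z in c..t, q z) = t :=
  Function.leftInverse_invFun (strictMono_primitive hq hq₀ c).injective t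

lemma primitive_quantile (hq : Continuous q) (hcd : c ≤ d)
    (hm : m ∈ Icc 0 (∫ z in c..d, q z)) : ∫ z in c..quantile q c m, q z = m :=
  let ⟨t, _, ht⟩ := exists_primitive_eq hq hcd hm
  Function.invFun_eq (f := fun t ↦ ∫ z in c..t, q z) ⟨t, ht⟩

lemma quantile_mem_Icc (hq : Continuous q) (hq₀ : ∀ t, 0 < q t) (hcd : c ≤ d)
    (hm : m ∈ Icc 0 (∫ z in c..d, q z)) : quantile q c m ∈ Icc c d := by
  obtain ⟨t, ht, rfl⟩ := exists_primitive_eq hq hcd hm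
  rwa [quantile_primitive hq hq₀]

lemma hasDerivAt_quantile (hq : Continuous q) (hq₀ : ∀ t, 0 < q t) (c t : ℝ) :
    HasDerivAt (quantile q c) (q t)⁻¹ (∫ z in c..t, q z) := by
  have hderiv := hasStrictDerivAt_primitive hq c t
  have hleft := quantile_primitive hq hq₀ c
  have hnhds := hderiv.map_nhds_eq (hq₀ t).ne'
  have hcont : ContinuousAt (quantile q c) (∫ z in c..t, q z) := by
    rw [ContinuousAt, ← hnhds, tendsto_map'_iff, hleft]
    simp only [Function.comp_def, hleft]
    exact tendsto_id
  refine HasDerivAt.of_local_left_inverse (f := fun t ↦ ∫ z in c..t, q z) hcont ?_ (hq₀ t).ne' ?_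
  · rw [hleft]
    exact hderiv.hasDerivAt
  · rw [← hnhds, eventually_map]
    exact .of_forall fun s ↦ by rw [hleft]

end Quantile

/-- The increasing map that carries the density `p` on `ℝ` onto the density `q` on `[c, d]`, after
both are normalised to have mass one. It is the constant `c` when `p` has mass zero. -/
def monotoneTransport (p q : ℝ → ℝ) (c d x : ℝ) : ℝ :=
  quantile q c ((∫ z in c..d, q z) * ((∫ z in Iic x, p z) / ∫ z, p z))

section MonotoneTransport

variable {p q φ : ℝ → ℝ} {c d : ℝ}

lemma eq_zero_of_integral_eq_zero (hp : Continuous p) (hpi : Integrable p) (hp₀ : 0 ≤ p)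
    (h : ∫ z, p z = 0) : p = 0 :=
  (hp.ae_eq_iff_eq volume continuous_zero).1 ((integral_eq_zero_iff_of_nonneg hp₀ hpi).1 h)

lemma hasDerivAt_integral_Iic (hp : Continuous p) (hpi : Integrable p) (x : ℝ) :
    HasDerivAt (fun x ↦ ∫ z in Iic x, p z) (p x) x := by
  have hsplit : (fun x ↦ ∫ z in Iic x, p z) =
      fun x ↦ (∫ z in (0 : ℝ)..x, p z) + ∫ z in Iic 0, p z := funext fun x ↦ by
    rw [← intervalIntegral.integral_Iic_sub_Iic hpi.integrableOn hpi.integrableOn, sub_add_cancel]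
  rw [hsplit]
  exact (hasStrictDerivAt_primitive hp 0 x).hasDerivAt.add_const _

lemma transportLevel_mem_Icc (hpi : Integrable p) (hp₀ : 0 ≤ p) (hq₀ : 0 ≤ q)
    (hcd : c ≤ d) (x : ℝ) :
    (∫ z in c..d, q z) * ((∫ z in Iic x, p z) / ∫ z, p z) ∈ Icc 0 (∫ z in c..d, q z) := by
  have hq_int : 0 ≤ ∫ z in c..d, q z := intervalIntegral.integral_nonneg hcd fun z _ ↦ hq₀ z
  have hle : (∫ z in Iic x, p z) ≤ ∫ z, p z :=
    setIntegral_le_integral hpi (.of_forall hp₀)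
  have hIic : 0 ≤ ∫ z in Iic x, p z := integral_nonneg hp₀
  exact ⟨mul_nonneg hq_int (div_nonneg hIic (hIic.trans hle)),
    mul_le_of_le_one_right hq_int (div_le_one_of_le₀ hle (hIic.trans hle))⟩

lemma primitive_monotoneTransport (hpi : Integrable p) (hp₀ : 0 ≤ p)
    (hq : Continuous q) (hq₀ : 0 ≤ q) (hcd : c ≤ d) (x : ℝ) :
    ∫ z in c..monotoneTransport p q c d x, q z =
      (∫ z in c..d, q z) * ((∫ z in Iic x, p z) / ∫ z, p z) :=
  primitive_quantile hq hcd (transportLevel_mem_Icc hpi hp₀ hq₀ hcd x)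

lemma monotoneTransport_mem_Icc (hpi : Integrable p) (hp₀ : 0 ≤ p)
    (hq : Continuous q) (hq₀ : ∀ t, 0 < q t) (hcd : c ≤ d) (x : ℝ) :
    monotoneTransport p q c d x ∈ Icc c d :=
  quantile_mem_Icc hq hq₀ hcd
    (transportLevel_mem_Icc hpi hp₀ (fun t ↦ (hq₀ t).le) hcd x)

lemma hasDerivAt_monotoneTransport (hp : Continuous p) (hpi : Integrable p) (hp₀ : 0 ≤ p)
    (hq : Continuous q) (hq₀ : ∀ t, 0 < q t) (hcd : c ≤ d) (x : ℝ) :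
    HasDerivAt (monotoneTransport p q c d)
      ((q (monotoneTransport p q c d x))⁻¹ * ((∫ z in c..d, q z) * (p x / ∫ z, p z))) x := by
  have hlevel := ((hasDerivAt_integral_Iic hp hpi x).div_const (∫ z, p z)).const_mul
    (∫ z in c..d, q z)
  have hquantile := hasDerivAt_quantile hq hq₀ c (monotoneTransport p q c d x)
  rw [primitive_monotoneTransport hpi hp₀ hq (fun t ↦ (hq₀ t).le) hcd] at hquantile
  exact hquantile.comp x hlevel

lemma contDiff_monotoneTransport (hp : Continuous p) (hpi : Integrable p) (hp₀ : 0 ≤ p)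
    (hq : Continuous q) (hq₀ : ∀ t, 0 < q t) (hcd : c ≤ d) :
    ContDiff ℝ 1 (monotoneTransport p q c d) := by
  have hderiv := hasDerivAt_monotoneTransport hp hpi hp₀ hq hq₀ hcd
  have hdiff : Differentiable ℝ (monotoneTransport p q c d) := fun x ↦ (hderiv x).differentiableAt
  refine contDiff_one_iff_deriv.2 ⟨hdiff, ?_⟩
  rw [funext fun x ↦ (hderiv x).deriv]
  have hinv := (hq.comp hdiff.continuous).inv₀ fun x ↦ (hq₀ _).ne'
  exact hinv.mul ((hp.div_const _).const_mul _)

lemma deriv_monotoneTransport_nonneg (hp : Continuous p) (hpi : Integrable p) (hp₀ : 0 ≤ p)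
    (hq : Continuous q) (hq₀ : ∀ t, 0 < q t) (hcd : c ≤ d) (x : ℝ) :
    0 ≤ deriv (monotoneTransport p q c d) x := by
  rw [(hasDerivAt_monotoneTransport hp hpi hp₀ hq hq₀ hcd x).deriv]
  have hq_int : 0 ≤ ∫ z in c..d, q z := intervalIntegral.integral_nonneg hcd fun z _ ↦ (hq₀ z).le
  exact mul_nonneg (inv_nonneg.2 (hq₀ _).le)
    (mul_nonneg hq_int (div_nonneg (hp₀ x) (integral_nonneg hp₀)))

lemma deriv_monotoneTransport_mul (hp : Continuous p) (hpi : Integrable p) (hp₀ : 0 ≤ p)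
    (hq : Continuous q) (hq₀ : ∀ t, 0 < q t) (hcd : c ≤ d) (x : ℝ) :
    (∫ z, p z) * (deriv (monotoneTransport p q c d) x * q (monotoneTransport p q c d x)) =
      (∫ z in c..d, q z) * p x := by
  rw [(hasDerivAt_monotoneTransport hp hpi hp₀ hq hq₀ hcd x).deriv]
  have hqT := (hq₀ (monotoneTransport p q c d x)).ne'
  by_cases h : ∫ z, p z = 0
  · simp [eq_zero_of_integral_eq_zero hp hpi hp₀ h]
  · field_simp

lemma tendsto_monotoneTransport_atBot (hq : Continuous q) (hq₀ : ∀ t, 0 < q t) :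
    Tendsto (monotoneTransport p q c d) atBot (𝓝 c) := by
  have hcont := (hasDerivAt_quantile hq hq₀ c c).continuousAt.tendsto
  rw [quantile_primitive hq hq₀, intervalIntegral.integral_same] at hcont
  have hcdf : Tendsto (fun x ↦ ∫ z in Iic x, p z) atBot (𝓝 0) :=
    tendsto_integral_Iic_zero tendsto_id
  have hlevel := (hcdf.div_const (∫ z, p z)).const_mul (∫ z in c..d, q z)
  rw [zero_div, mul_zero] at hlevel
  exact hcont.comp hlevel

lemma tendsto_monotoneTransport_atTop (hpi : Integrable p) (hp : ∫ z, p z ≠ 0)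
    (hq : Continuous q) (hq₀ : ∀ t, 0 < q t) :
    Tendsto (monotoneTransport p q c d) atTop (𝓝 d) := by
  have hcont := (hasDerivAt_quantile hq hq₀ c d).continuousAt.tendsto
  rw [quantile_primitive hq hq₀] at hcont
  have hcdf : Tendsto (fun x ↦ ∫ z in Iic x, p z) atTop (𝓝 (∫ z, p z)) :=
    (aecover_Iic tendsto_id).integral_tendsto_of_countably_generated hpi
  have hlevel := (hcdf.div_const (∫ z, p z)).const_mul (∫ z in c..d, q z)
  rw [div_self hp, mul_one] at hlevel
  exact hcont.comp hlevel

lemma integral_mul_comp_monotoneTransport (hp : Continuous p) (hpi : Integrable p) (hp₀ : 0 ≤ p)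
    (hq : Continuous q) (hq₀ : ∀ t, 0 < q t) (hcd : c ≤ d) (hφ : Continuous φ) :
    (∫ z in c..d, q z) * ∫ x, p x * φ (monotoneTransport p q c d x) =
      (∫ z, p z) * ∫ t in c..d, q t * φ t := by
  by_cases hp_int : ∫ z, p z = 0
  · simp [eq_zero_of_integral_eq_zero hp hpi hp₀ hp_int]
  set T := monotoneTransport p q c d
  have hT : ContDiff ℝ 1 T := contDiff_monotoneTransport hp hpi hp₀ hq hq₀ hcd
  have hchain (x : ℝ) : HasDerivAt (fun x ↦ (∫ z, p z) * ∫ t in c..T x, q t * φ t)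
      ((∫ z in c..d, q z) * (p x * φ (T x))) x := by
    have hprim := (hasStrictDerivAt_primitive (hq.mul hφ) c (T x)).hasDerivAt
    refine ((hprim.comp x (hT.differentiable one_ne_zero x).hasDerivAt).const_mul
      (∫ z, p z)).congr_deriv ?_
    rw [Pi.mul_apply]
    linear_combination φ (T x) * deriv_monotoneTransport_mul hp hpi hp₀ hq hq₀ hcd x
  have hint : Integrable fun x ↦ p x * φ (T x) := by
    obtain ⟨C, hC⟩ := isCompact_Icc.exists_bound_of_continuousOn (hφ.continuousOn (s := Icc c d))
    exact hpi.mul_bdd (hφ.comp hT.continuous).aestronglyMeasurable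
      (.of_forall fun x ↦ hC _ (monotoneTransport_mem_Icc hpi hp₀ hq hq₀ hcd x))
  have hprim : Continuous fun s ↦ ∫ t in c..s, q t * φ t :=
    intervalIntegral.continuous_primitive (fun _ _ ↦ (hq.mul hφ).intervalIntegrable _ _) c
  rw [← integral_const_mul, integral_of_hasDerivAt_of_tendsto hchain (hint.const_mul _)
    (((hprim.tendsto c).comp (tendsto_monotoneTransport_atBot hq hq₀)).const_mul _)
    (((hprim.tendsto d).comp (tendsto_monotoneTransport_atTop hpi hp_int hq hq₀)).const_mul _)]
  simp

end MonotoneTransport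

/-! ### The Knothe map -/

section Slice

lemma hasCompactSupport_slice {X Y M : Type*} [TopologicalSpace X] [T1Space X]
    [TopologicalSpace Y] [Zero M] {F : X × Y → M} (hF : HasCompactSupport F) (x : X) :
    HasCompactSupport fun y ↦ F (x, y) :=
  hF.comp_isClosedEmbedding (.of_continuous_injective_isClosedMap (.prodMk_right x)
    (Prod.mk_right_injective x) (isClosedMap_prodMk_left x))

variable {F G : ℝ × ℝ → ℝ} {c d : ℝ}

lemma integrable_slice (hF : Continuous F) (hF_supp : HasCompactSupport F) (x : ℝ) :
    Integrable fun y ↦ F (x, y) :=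
  (hF.comp (.prodMk_right x)).integrable_of_hasCompactSupport (hasCompactSupport_slice hF_supp x)

lemma continuous_integral_slice (hF : Continuous F) (hF_supp : HasCompactSupport F) :
    Continuous fun x ↦ ∫ y, F (x, y) := by
  refine continuousOn_univ.1 (continuousOn_integral_of_compact_support
    (hF_supp.isCompact.image continuous_snd) hF.continuousOn fun x y _ hy ↦ ?_)
  exact image_eq_zero_of_notMem_tsupport fun h ↦ hy ⟨_, h, rfl⟩

lemma integrable_integral_slice (hF : Continuous F) (hF_supp : HasCompactSupport F) :
    Integrable fun x ↦ ∫ y, F (x, y) :=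
  (hF.integrable_of_hasCompactSupport (μ := volume.prod volume) hF_supp).integral_prod_left

lemma continuous_intervalIntegral_slice (hG : Continuous G) (c d : ℝ) :
    Continuous fun s ↦ ∫ t in c..d, G (s, t) :=
  intervalIntegral.continuous_parametric_intervalIntegral_of_continuous' (f := fun s t ↦ G (s, t))
    hG c d

lemma intervalIntegral_slice_pos (hG : Continuous G) (hG₀ : ∀ p, 0 < G p) (hcd : c < d) (s : ℝ) :
    0 < ∫ t in c..d, G (s, t) :=
  intervalIntegral.intervalIntegral_pos_of_pos
    ((hG.comp (.prodMk_right s)).intervalIntegrable _ _) (fun _ ↦ hG₀ _) hcd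

lemma integral_intervalIntegral_slice_pos (hG : Continuous G) (hG₀ : ∀ p, 0 < G p) (hcd : c < d) :
    0 < ∫ s in c..d, ∫ t in c..d, G (s, t) :=
  intervalIntegral.intervalIntegral_pos_of_pos
    ((continuous_intervalIntegral_slice hG c d).intervalIntegrable c d)
    (intervalIntegral_slice_pos hG hG₀ hcd) hcd

lemma setIntegral_Icc_prod_Icc (hG : Continuous G) (hcd : c ≤ d) :
    ∫ p in Icc c d ×ˢ Icc c d, G p = ∫ s in c..d, ∫ t in c..d, G (s, t) := by
  rw [Measure.volume_eq_prod, setIntegral_prod _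
    (hG.continuousOn.integrableOn_compact (isCompact_Icc.prod isCompact_Icc))]
  simp only [intervalIntegral.integral_of_le hcd, integral_Icc_eq_integral_Ioc]

end Slice

/-- The first component of the Knothe map from the density `F` on the plane to the density `G` on
the square `[c, d]²`: it transports the first marginal of `F` monotonically to that of `G`. -/
def knotheFst (F G : ℝ × ℝ → ℝ) (c d : ℝ) : ℝ → ℝ :=
  monotoneTransport (fun x ↦ ∫ y, F (x, y)) (fun s ↦ ∫ t in c..d, G (s, t)) c d

/-- The second component of the Knothe map: on each vertical line it transports the slice of `F`
monotonically to the slice of `G` over the image of that line. -/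
def knotheSnd (F G : ℝ × ℝ → ℝ) (c d x : ℝ) : ℝ → ℝ :=
  monotoneTransport (fun y ↦ F (x, y)) (fun t ↦ G (knotheFst F G c d x, t)) c d

/-- The Knothe map, the triangular rearrangement that carries the density `F` on the plane to the
density `G` on the square `[c, d]²`. -/
def knothe (F G : ℝ × ℝ → ℝ) (c d : ℝ) (p : ℝ × ℝ) : ℝ × ℝ :=
  (knotheFst F G c d p.1, knotheSnd F G c d p.1 p.2)

section Knothe

variable {F G : ℝ × ℝ → ℝ} {c d : ℝ}

lemma contDiff_knotheFst (hF : Continuous F) (hF_supp : HasCompactSupport F) (hF₀ : 0 ≤ F)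
    (hG : Continuous G) (hG₀ : ∀ p, 0 < G p) (hcd : c < d) :
    ContDiff ℝ 1 (knotheFst F G c d) :=
  contDiff_monotoneTransport (continuous_integral_slice hF hF_supp)
    (integrable_integral_slice hF hF_supp) (fun x ↦ integral_nonneg fun y ↦ hF₀ (x, y))
    (continuous_intervalIntegral_slice hG c d) (intervalIntegral_slice_pos hG hG₀ hcd) hcd.le

lemma contDiff_knotheSnd (hF : Continuous F) (hF_supp : HasCompactSupport F) (hF₀ : 0 ≤ F)
    (hG : Continuous G) (hG₀ : ∀ p, 0 < G p) (hcd : c ≤ d) (x : ℝ) :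
    ContDiff ℝ 1 (knotheSnd F G c d x) :=
  contDiff_monotoneTransport (hF.comp (.prodMk_right x)) (integrable_slice hF hF_supp x)
    (fun y ↦ hF₀ (x, y)) (hG.comp (.prodMk_right _)) (fun t ↦ hG₀ (_, t)) hcd

lemma deriv_knotheFst_nonneg (hF : Continuous F) (hF_supp : HasCompactSupport F) (hF₀ : 0 ≤ F)
    (hG : Continuous G) (hG₀ : ∀ p, 0 < G p) (hcd : c < d) (x : ℝ) :
    0 ≤ deriv (knotheFst F G c d) x :=
  deriv_monotoneTransport_nonneg (continuous_integral_slice hF hF_supp)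
    (integrable_integral_slice hF hF_supp) (fun x ↦ integral_nonneg fun y ↦ hF₀ (x, y))
    (continuous_intervalIntegral_slice hG c d) (intervalIntegral_slice_pos hG hG₀ hcd) hcd.le x

lemma deriv_knotheSnd_nonneg (hF : Continuous F) (hF_supp : HasCompactSupport F) (hF₀ : 0 ≤ F)
    (hG : Continuous G) (hG₀ : ∀ p, 0 < G p) (hcd : c ≤ d) (x y : ℝ) :
    0 ≤ deriv (knotheSnd F G c d x) y :=
  deriv_monotoneTransport_nonneg (hF.comp (.prodMk_right x)) (integrable_slice hF hF_supp x)
    (fun y ↦ hF₀ (x, y)) (hG.comp (.prodMk_right _)) (fun t ↦ hG₀ (_, t)) hcd y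

lemma knothe_mem (hF : Continuous F) (hF_supp : HasCompactSupport F) (hF₀ : 0 ≤ F)
    (hG : Continuous G) (hG₀ : ∀ p, 0 < G p) (hcd : c < d) (p : ℝ × ℝ) :
    knothe F G c d p ∈ Icc c d ×ˢ Icc c d :=
  ⟨monotoneTransport_mem_Icc (integrable_integral_slice hF hF_supp)
      (fun x ↦ integral_nonneg fun y ↦ hF₀ (x, y)) (continuous_intervalIntegral_slice hG c d)
      (intervalIntegral_slice_pos hG hG₀ hcd) hcd.le p.1,
    monotoneTransport_mem_Icc (integrable_slice hF hF_supp p.1) (fun y ↦ hF₀ (p.1, y))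
      (hG.comp (.prodMk_right _)) (fun t ↦ hG₀ (_, t)) hcd.le p.2⟩

lemma measurable_knothe (hF : Continuous F) (hF_supp : HasCompactSupport F) (hF₀ : 0 ≤ F)
    (hG : Continuous G) (hG₀ : ∀ p, 0 < G p) (hcd : c < d) : Measurable (knothe F G c d) := by
  have hfst : Continuous (knotheFst F G c d) :=
    (contDiff_knotheFst hF hF_supp hF₀ hG hG₀ hcd).continuous
  refine (hfst.measurable.comp measurable_fst).prodMk (measurable_of_Iic fun t ↦ ?_)
  have hpre : (fun p : ℝ × ℝ ↦ knotheSnd F G c d p.1 p.2) ⁻¹' Iic t =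
      {p | (∫ z in c..d, G (knotheFst F G c d p.1, z)) *
          ((∫ z in Iic p.2, F (p.1, z)) / ∫ z, F (p.1, z)) ≤
        ∫ z in c..t, G (knotheFst F G c d p.1, z)} := by
    ext p
    have hG_slice : Continuous fun z ↦ G (knotheFst F G c d p.1, z) := hG.comp (.prodMk_right _)
    rw [mem_ofPred_eq, ← primitive_monotoneTransport (integrable_slice hF hF_supp p.1)
      (fun y ↦ hF₀ (p.1, y)) hG_slice (fun z ↦ (hG₀ (_, z)).le) hcd.le p.2]
    exact (strictMono_primitive hG_slice (fun z ↦ hG₀ (_, z)) c).le_iff_le.symm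
  have htarget (t : ℝ) : Measurable fun p : ℝ × ℝ ↦ ∫ z in c..t, G (knotheFst F G c d p.1, z) :=
    ((continuous_intervalIntegral_slice hG c t).comp (hfst.comp continuous_fst)).measurable
  have hmass : Measurable fun p : ℝ × ℝ ↦ ∫ z, F (p.1, z) :=
    ((continuous_integral_slice hF hF_supp).comp continuous_fst).measurable
  have hcdf : Measurable fun p : ℝ × ℝ ↦ ∫ z in Iic p.2, F (p.1, z) := by
    simp_rw [← integral_indicator measurableSet_Iic]
    have hind : Measurable ({q : (ℝ × ℝ) × ℝ | q.2 ≤ q.1.2}.indicator fun q ↦ F (q.1.1, q.2)) :=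
      (by fun_prop : Continuous fun q : (ℝ × ℝ) × ℝ ↦ F (q.1.1, q.2)).measurable.indicator
        (measurableSet_le (by fun_prop) (by fun_prop))
    exact (hind.stronglyMeasurable.integral_prod_right
      (f := fun (p : ℝ × ℝ) z ↦ (Iic p.2).indicator (fun z ↦ F (p.1, z)) z)).measurable
  rw [hpre]
  exact measurableSet_le ((htarget d).mul (hcdf.div hmass)) (htarget t)

lemma memLp_mul_comp_knothe (hF : Continuous F) (hF_supp : HasCompactSupport F) (hF₀ : 0 ≤ F)
    (hG : Continuous G) (hG₀ : ∀ p, 0 < G p) (hcd : c < d) {g φ : ℝ × ℝ → ℝ} {r : ENNReal}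
    (hg : MemLp g r) (hφ : Continuous φ) :
    MemLp (fun p ↦ g p * φ (knothe F G c d p)) r := by
  obtain ⟨C, hC⟩ := (isCompact_Icc.prod isCompact_Icc).exists_bound_of_continuousOn
    (hφ.continuousOn (s := Icc c d ×ˢ Icc c d))
  refine hg.of_le_mul (c := C) (hg.1.mul (hφ.measurable.comp
    (measurable_knothe hF hF_supp hF₀ hG hG₀ hcd)).aestronglyMeasurable) (.of_forall fun p ↦ ?_)
  rw [norm_mul, mul_comm]
  gcongr
  exact hC _ (knothe_mem hF hF_supp hF₀ hG hG₀ hcd p)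

lemma integrable_mul_comp_knothe (hF : Continuous F) (hF_supp : HasCompactSupport F) (hF₀ : 0 ≤ F)
    (hG : Continuous G) (hG₀ : ∀ p, 0 < G p) (hcd : c < d) {g φ : ℝ × ℝ → ℝ}
    (hg : Integrable g) (hφ : Continuous φ) :
    Integrable fun p ↦ g p * φ (knothe F G c d p) :=
  memLp_one_iff_integrable.1 (memLp_mul_comp_knothe hF hF_supp hF₀ hG hG₀ hcd
    (memLp_one_iff_integrable.2 hg) hφ)

lemma integral_marginal_eq (hF : Continuous F) (hF_supp : HasCompactSupport F)
    (hG : Continuous G) (hcd : c ≤ d) (hFG : ∫ p, F p = ∫ p in Icc c d ×ˢ Icc c d, G p) :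
    ∫ x, ∫ y, F (x, y) = ∫ s in c..d, ∫ t in c..d, G (s, t) := by
  rw [← setIntegral_Icc_prod_Icc hG hcd, ← hFG, Measure.volume_eq_prod,
    integral_prod _ (hF.integrable_of_hasCompactSupport hF_supp)]

lemma integral_mul_comp_knothe (hF : Continuous F) (hF_supp : HasCompactSupport F) (hF₀ : 0 ≤ F)
    (hG : Continuous G) (hG₀ : ∀ p, 0 < G p) (hcd : c < d)
    (hFG : ∫ p, F p = ∫ p in Icc c d ×ˢ Icc c d, G p) {φ : ℝ × ℝ → ℝ} (hφ : Continuous φ) :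
    ∫ p, F p * φ (knothe F G c d p) = ∫ p in Icc c d ×ˢ Icc c d, G p * φ p := by
  have hA_pos := intervalIntegral_slice_pos hG hG₀ hcd
  have hA := continuous_intervalIntegral_slice hG c d
  have hmass := integral_marginal_eq hF hF_supp hG hcd.le hFG
  have hmass_pos := integral_intervalIntegral_slice_pos hG hG₀ hcd
  let Ψ (s : ℝ) : ℝ := (∫ t in c..d, G (s, t) * φ (s, t)) / ∫ t in c..d, G (s, t)
  have hΨ : Continuous Ψ := (continuous_intervalIntegral_slice (hG.mul hφ) c d).div hA
    fun s ↦ (hA_pos s).ne'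
  have hslice (x : ℝ) : ∫ y, F (x, y) * φ (knothe F G c d (x, y)) =
      (∫ y, F (x, y)) * Ψ (knotheFst F G c d x) := by
    have h := integral_mul_comp_monotoneTransport (hF.comp (.prodMk_right x))
      (integrable_slice hF hF_supp x) (fun y ↦ hF₀ (x, y))
      (hG.comp (.prodMk_right (knotheFst F G c d x))) (fun t ↦ hG₀ (_, t)) hcd.le
      (hφ.comp (.prodMk_right (knotheFst F G c d x)))
    rw [← mul_div_assoc, eq_div_iff (hA_pos _).ne', mul_comm]
    exact h
  have hmarginal := integral_mul_comp_monotoneTransport (continuous_integral_slice hF hF_supp)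
    (integrable_integral_slice hF hF_supp) (fun x ↦ integral_nonneg fun y ↦ hF₀ (x, y)) hA hA_pos
    hcd.le hΨ
  rw [hmass] at hmarginal
  calc ∫ p, F p * φ (knothe F G c d p)
      = ∫ x, (∫ y, F (x, y)) * Ψ (knotheFst F G c d x) := by
        rw [Measure.volume_eq_prod, integral_prod _ (integrable_mul_comp_knothe hF hF_supp hF₀ hG
          hG₀ hcd (hF.integrable_of_hasCompactSupport hF_supp) hφ), funext hslice]
    _ = ∫ s in c..d, (∫ t in c..d, G (s, t)) * Ψ s := mul_left_cancel₀ hmass_pos.ne' hmarginal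
    _ = ∫ s in c..d, ∫ t in c..d, G (s, t) * φ (s, t) := by
        simp only [Ψ, mul_div_cancel₀ _ (hA_pos _).ne']
    _ = ∫ p in Icc c d ×ˢ Icc c d, G p * φ p := (setIntegral_Icc_prod_Icc (hG.mul hφ) hcd.le).symm

lemma deriv_knotheFst_mul_deriv_knotheSnd_mul (hF : Continuous F) (hF_supp : HasCompactSupport F)
    (hF₀ : 0 ≤ F) (hG : Continuous G) (hG₀ : ∀ p, 0 < G p) (hcd : c < d)
    (hFG : ∫ p, F p = ∫ p in Icc c d ×ˢ Icc c d, G p) (x y : ℝ) :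
    deriv (knotheFst F G c d) x * deriv (knotheSnd F G c d x) y * G (knothe F G c d (x, y)) =
      F (x, y) := by
  have hA_pos := intervalIntegral_slice_pos hG hG₀ hcd
  have hA := continuous_intervalIntegral_slice hG c d
  have hmass_pos := integral_intervalIntegral_slice_pos hG hG₀ hcd
  have hfst : deriv (knotheFst F G c d) x * (∫ t in c..d, G (knotheFst F G c d x, t)) =
      ∫ y, F (x, y) := by
    have h := deriv_monotoneTransport_mul (continuous_integral_slice hF hF_supp)
      (integrable_integral_slice hF hF_supp) (fun x ↦ integral_nonneg fun y ↦ hF₀ (x, y)) hA hA_pos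
      hcd.le x
    rw [integral_marginal_eq hF hF_supp hG hcd.le hFG] at h
    exact mul_left_cancel₀ hmass_pos.ne' h
  have hsnd : (∫ y, F (x, y)) * (deriv (knotheSnd F G c d x) y * G (knothe F G c d (x, y))) =
      (∫ t in c..d, G (knotheFst F G c d x, t)) * F (x, y) :=
    deriv_monotoneTransport_mul (hF.comp (.prodMk_right x)) (integrable_slice hF hF_supp x)
      (fun y ↦ hF₀ (x, y)) (hG.comp (.prodMk_right _)) (fun t ↦ hG₀ (_, t)) hcd.le y
  rw [← hfst] at hsnd
  refine mul_left_cancel₀ (hA_pos (knotheFst F G c d x)).ne' ?_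
  linear_combination hsnd

end Knothe

/-! ### Integration by parts along the Knothe map -/

section Transport

lemma hasCompactSupport_pow {X M : Type*} [TopologicalSpace X] [MonoidWithZero M]
    {f : X → M} (hf : HasCompactSupport f) {n : ℕ} (hn : n ≠ 0) : HasCompactSupport (f ^ n) :=
  hf.comp_left (g := (· ^ n)) (zero_pow hn)

lemma integral_sq_mul_fderiv {E : Type*} [NormedAddCommGroup E] [NormedSpace ℝ E]
    [FiniteDimensional ℝ E] [MeasurableSpace E] [BorelSpace E] (μ : Measure E) [μ.IsAddHaarMeasure]
    {f g : E → ℝ} (hf : ContDiff ℝ 1 f) (hf_supp : HasCompactSupport f) (hg : ContDiff ℝ 1 g)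
    (v : E) :
    ∫ x, f x ^ 2 * fderiv ℝ g x v ∂μ = -(2 * ∫ x, f x * fderiv ℝ f x v * g x ∂μ) := by
  have hf_diff := hf.differentiable one_ne_zero
  have hg_diff := hg.differentiable one_ne_zero
  have hdf : Continuous fun x ↦ fderiv ℝ f x v := (hf.continuous_fderiv one_ne_zero).clm_apply
    continuous_const
  have hdg : Continuous fun x ↦ fderiv ℝ g x v := (hg.continuous_fderiv one_ne_zero).clm_apply
    continuous_const
  have hsq (x : E) : fderiv ℝ (fun x ↦ f x ^ 2) x v = 2 * (f x * fderiv ℝ f x v) := by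
    simp [fderiv_fun_pow 2 (hf_diff x), mul_assoc]
  have hsq_supp : HasCompactSupport fun x ↦ f x ^ 2 := hasCompactSupport_pow hf_supp two_ne_zero
  rw [integral_mul_fderiv_eq_neg_fderiv_mul_of_integrable]
  · simp only [hsq, mul_assoc, integral_const_mul]
  · simp only [hsq]
    exact ((hf.continuous.mul hdf).const_mul 2).mul hg.continuous
      |>.integrable_of_hasCompactSupport hf_supp.mul_right.mul_left.mul_right
  · exact ((hf.continuous.pow 2).mul hdg).integrable_of_hasCompactSupport hsq_supp.mul_right
  · exact ((hf.continuous.pow 2).mul hg.continuous).integrable_of_hasCompactSupport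
      hsq_supp.mul_right
  · exact fun x _ ↦ (hf_diff x).pow 2
  · exact fun x _ ↦ hg_diff x

variable {u : ℝ × ℝ → ℝ}

lemma integral_sq_mul_deriv_slice (hu : ContDiff ℝ 1 u) (hu_supp : HasCompactSupport u)
    {T : ℝ → ℝ} (hT : ContDiff ℝ 1 T) (x : ℝ) :
    ∫ y, u (x, y) ^ 2 * deriv T y =
      -(2 * ∫ y, u (x, y) * fderiv ℝ u (x, y) (0, 1) * T y) := by
  have hchain (y : ℝ) : deriv (fun y ↦ u (x, y)) y = fderiv ℝ u (x, y) (0, 1) := by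
    have h := (hu.differentiable one_ne_zero (x, y)).hasFDerivAt.comp y
      (hasFDerivAt_prodMk_right (𝕜 := ℝ) x y)
    exact DFunLike.congr_fun h.fderiv 1
  have hslice : ContDiff ℝ 1 fun y ↦ u (x, y) := hu.comp (contDiff_prodMk_right x)
  simpa only [fderiv_apply_one_eq_deriv, hchain] using
    integral_sq_mul_fderiv volume hslice (hasCompactSupport_slice hu_supp x) hT 1

lemma integral_sq_mul_deriv_fst (hu : ContDiff ℝ 1 u) (hu_supp : HasCompactSupport u)
    {T : ℝ → ℝ} (hT : ContDiff ℝ 1 T) :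
    ∫ p : ℝ × ℝ, u p ^ 2 * deriv T p.1 = -(2 * ∫ p, u p * fderiv ℝ u p (1, 0) * T p.1) := by
  have hchain (p : ℝ × ℝ) : fderiv ℝ (T ∘ Prod.fst) p (1, 0) = deriv T p.1 := by
    have h := (hT.differentiable one_ne_zero p.1).hasFDerivAt.comp p (hasFDerivAt_fst (𝕜 := ℝ))
    exact DFunLike.congr_fun h.fderiv (1, 0)
  simpa only [hchain, Function.comp_apply] using
    integral_sq_mul_fderiv volume hu hu_supp (hT.comp contDiff_fst) (1, 0)

lemma clm_apply_eq_fst_add_snd (L : ℝ × ℝ →L[ℝ] ℝ) (p : ℝ × ℝ) :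
    L p = L (1, 0) * p.1 + L (0, 1) * p.2 := by
  have hp : p = p.1 • (1, 0) + p.2 • (0, 1) := by ext <;> simp
  conv_lhs => rw [hp, map_add, map_smul, map_smul]
  simp [mul_comm]

variable {h : ℝ × ℝ → ℝ} {c d : ℝ}

lemma pow_four_mul_inv_le (hu : Continuous u) (hu_supp : HasCompactSupport u)
    (hh : Continuous h) (hh₀ : ∀ p, 0 < h p) (hcd : c < d)
    (hmass : ∫ p, u p ^ 4 = ∫ p in Icc c d ×ˢ Icc c d, h p ^ 2) (x y : ℝ) :
    u (x, y) ^ 4 * (h (knothe (u ^ 4) (h ^ 2) c d (x, y)))⁻¹ ≤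
      (u (x, y) ^ 2 * deriv (knotheFst (u ^ 4) (h ^ 2) c d) x +
        u (x, y) ^ 2 * deriv (knotheSnd (u ^ 4) (h ^ 2) c d x) y) / 2 := by
  have hu4_supp : HasCompactSupport (u ^ 4) := hasCompactSupport_pow hu_supp four_ne_zero
  have hu4 : 0 ≤ u ^ 4 := fun p ↦ (even_two_mul 2).pow_nonneg (u p)
  have hh2 (p : ℝ × ℝ) : 0 < (h ^ 2) p := pow_pos (hh₀ p) 2
  have hT₁ := deriv_knotheFst_nonneg (hu.pow 4) hu4_supp hu4 (hh.pow 2) hh2 hcd x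
  have hT₂ := deriv_knotheSnd_nonneg (hu.pow 4) hu4_supp hu4 (hh.pow 2) hh2 hcd.le x y
  have hjac := deriv_knotheFst_mul_deriv_knotheSnd_mul (hu.pow 4) hu4_supp hu4 (hh.pow 2) hh2 hcd
    hmass x y
  simp only [Pi.pow_apply] at hjac
  have hpos := hh₀ (knothe (u ^ 4) (h ^ 2) c d (x, y))
  set a := deriv (knotheFst (u ^ 4) (h ^ 2) c d) x
  set b := deriv (knotheSnd (u ^ 4) (h ^ 2) c d x) y
  set k := h (knothe (u ^ 4) (h ^ 2) c d (x, y))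
  have hamgm : u (x, y) ^ 2 * k⁻¹ ≤ (a + b) / 2 := by
    refine le_of_sq_le_sq ?_ (by positivity)
    calc (u (x, y) ^ 2 * k⁻¹) ^ 2 = a * b := by field_simp; linear_combination -hjac
      _ ≤ ((a + b) / 2) ^ 2 := by linarith [four_mul_le_sq_add a b]
  calc u (x, y) ^ 4 * k⁻¹ = u (x, y) ^ 2 * (u (x, y) ^ 2 * k⁻¹) := by ring
    _ ≤ u (x, y) ^ 2 * ((a + b) / 2) := by gcongr
    _ = (u (x, y) ^ 2 * a + u (x, y) ^ 2 * b) / 2 := by ring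

-- `knotheSnd` is differentiable in `y` only, so its derivative is integrated by parts on each
-- vertical line and not on the plane.
lemma integral_slice_pow_four_mul_inv_le (hu : ContDiff ℝ 1 u) (hu_supp : HasCompactSupport u)
    (hh : Continuous h) (hh₀ : ∀ p, 0 < h p) (hcd : c < d)
    (hmass : ∫ p, u p ^ 4 = ∫ p in Icc c d ×ˢ Icc c d, h p ^ 2) (x : ℝ) :
    ∫ y, u (x, y) ^ 4 * (h (knothe (u ^ 4) (h ^ 2) c d (x, y)))⁻¹ ≤
      (∫ y, u (x, y) ^ 2 * deriv (knotheFst (u ^ 4) (h ^ 2) c d) x) / 2 -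
        ∫ y, u (x, y) * fderiv ℝ u (x, y) (0, 1) * knotheSnd (u ^ 4) (h ^ 2) c d x y := by
  set T₁ := knotheFst (u ^ 4) (h ^ 2) c d
  set T₂ := knotheSnd (u ^ 4) (h ^ 2) c d
  have hu4_supp : HasCompactSupport (u ^ 4) := hasCompactSupport_pow hu_supp four_ne_zero
  have hT₂ : ContDiff ℝ 1 (T₂ x) :=
    contDiff_knotheSnd (hu.continuous.pow 4) hu4_supp (fun p ↦ (even_two_mul 2).pow_nonneg (u p))
      (hh.pow 2) (fun p ↦ pow_pos (hh₀ p) 2) hcd.le x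
  have hslice : ContDiff ℝ 1 fun y ↦ u (x, y) := hu.comp (contDiff_prodMk_right x)
  have hslice_supp := hasCompactSupport_slice hu_supp x
  have hsq_supp : HasCompactSupport fun y ↦ u (x, y) ^ 2 :=
    hasCompactSupport_pow hslice_supp two_ne_zero
  have hint₁ : Integrable fun y ↦ u (x, y) ^ 2 * deriv T₁ x :=
    ((hslice.continuous.pow 2).mul continuous_const).integrable_of_hasCompactSupport
      hsq_supp.mul_right
  have hint₂ : Integrable fun y ↦ u (x, y) ^ 2 * deriv (T₂ x) y :=
    ((hslice.continuous.pow 2).mul (hT₂.continuous_deriv le_rfl)).integrable_of_hasCompactSupport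
      hsq_supp.mul_right
  calc ∫ y, u (x, y) ^ 4 * (h (knothe (u ^ 4) (h ^ 2) c d (x, y)))⁻¹
      ≤ ∫ y, (u (x, y) ^ 2 * deriv T₁ x + u (x, y) ^ 2 * deriv (T₂ x) y) / 2 :=
        integral_mono_of_nonneg
          (.of_forall fun y ↦ mul_nonneg (by positivity) (inv_nonneg.2 (hh₀ _).le))
          ((hint₁.add hint₂).div_const 2)
          (.of_forall fun y ↦ pow_four_mul_inv_le hu.continuous hu_supp hh hh₀ hcd hmass x y)
    _ = _ := by
        rw [integral_div, integral_add hint₁ hint₂,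
          integral_sq_mul_deriv_slice hu hu_supp hT₂ x]
        ring

lemma integrable_mul_fderiv_mul_comp_knothe (hu : ContDiff ℝ 1 u) (hu_supp : HasCompactSupport u)
    (hh : Continuous h) (hh₀ : ∀ p, 0 < h p) (hcd : c < d) {φ : ℝ × ℝ → ℝ} (hφ : Continuous φ)
    (v : ℝ × ℝ) :
    Integrable fun p ↦ u p * fderiv ℝ u p v * φ (knothe (u ^ 4) (h ^ 2) c d p) :=
  integrable_mul_comp_knothe (hu.continuous.pow 4) (hasCompactSupport_pow hu_supp four_ne_zero)
    (fun p ↦ (even_two_mul 2).pow_nonneg (u p)) (hh.pow 2) (fun p ↦ pow_pos (hh₀ p) 2) hcd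
    ((hu.continuous.mul ((hu.continuous_fderiv one_ne_zero).clm_apply continuous_const))
      |>.integrable_of_hasCompactSupport hu_supp.mul_right) hφ

lemma integral_pow_four_mul_inv_le (hu : ContDiff ℝ 1 u) (hu_supp : HasCompactSupport u)
    (hh : Continuous h) (hh₀ : ∀ p, 0 < h p) (hcd : c < d)
    (hmass : ∫ p, u p ^ 4 = ∫ p in Icc c d ×ˢ Icc c d, h p ^ 2) :
    ∫ p, u p ^ 4 * (h (knothe (u ^ 4) (h ^ 2) c d p))⁻¹ ≤
      -∫ p, u p * fderiv ℝ u p (knothe (u ^ 4) (h ^ 2) c d p) := by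
  set T₁ := knotheFst (u ^ 4) (h ^ 2) c d
  set T₂ := knotheSnd (u ^ 4) (h ^ 2) c d
  have hu4_supp : HasCompactSupport (u ^ 4) := hasCompactSupport_pow hu_supp four_ne_zero
  have hu4 : 0 ≤ u ^ 4 := fun p ↦ (even_two_mul 2).pow_nonneg (u p)
  have hh2 (p : ℝ × ℝ) : 0 < (h ^ 2) p := pow_pos (hh₀ p) 2
  have hT₁ : ContDiff ℝ 1 T₁ :=
    contDiff_knotheFst (hu.continuous.pow 4) hu4_supp hu4 (hh.pow 2) hh2 hcd
  have hint_inv := integrable_mul_comp_knothe (hu.continuous.pow 4) hu4_supp hu4 (hh.pow 2) hh2 hcd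
    ((hu.continuous.pow 4).integrable_of_hasCompactSupport hu4_supp)
    (hh.inv₀ fun p ↦ (hh₀ p).ne')
  have hint₁ : Integrable fun p ↦ u p * fderiv ℝ u p (1, 0) * T₁ p.1 :=
    integrable_mul_fderiv_mul_comp_knothe hu hu_supp hh hh₀ hcd continuous_fst _
  have hint₂ : Integrable fun p ↦ u p * fderiv ℝ u p (0, 1) * T₂ p.1 p.2 :=
    integrable_mul_fderiv_mul_comp_knothe hu hu_supp hh hh₀ hcd continuous_snd _
  have hint₃ : Integrable fun p : ℝ × ℝ ↦ u p ^ 2 * deriv T₁ p.1 :=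
    ((hu.continuous.pow 2).mul ((hT₁.continuous_deriv le_rfl).comp continuous_fst))
      |>.integrable_of_hasCompactSupport (hasCompactSupport_pow hu_supp two_ne_zero).mul_right
  have hsplit (p : ℝ × ℝ) : u p * fderiv ℝ u p (knothe (u ^ 4) (h ^ 2) c d p) =
      u p * fderiv ℝ u p (1, 0) * T₁ p.1 + u p * fderiv ℝ u p (0, 1) * T₂ p.1 p.2 := by
    rw [clm_apply_eq_fst_add_snd, mul_add, ← mul_assoc, ← mul_assoc]
    rfl
  calc ∫ p, u p ^ 4 * (h (knothe (u ^ 4) (h ^ 2) c d p))⁻¹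
      = ∫ x, ∫ y, u (x, y) ^ 4 * (h (knothe (u ^ 4) (h ^ 2) c d (x, y)))⁻¹ :=
        integral_prod _ hint_inv
    _ ≤ ∫ x, ((∫ y, u (x, y) ^ 2 * deriv T₁ x) / 2 -
          ∫ y, u (x, y) * fderiv ℝ u (x, y) (0, 1) * T₂ x y) :=
        integral_mono hint_inv.integral_prod_left
          ((hint₃.integral_prod_left.div_const 2).sub hint₂.integral_prod_left)
          (integral_slice_pow_four_mul_inv_le hu hu_supp hh hh₀ hcd hmass)
    _ = (∫ p : ℝ × ℝ, u p ^ 2 * deriv T₁ p.1) / 2 -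
          ∫ p : ℝ × ℝ, u p * fderiv ℝ u p (0, 1) * T₂ p.1 p.2 := by
        rw [integral_sub (hint₃.integral_prod_left.div_const 2) hint₂.integral_prod_left,
          integral_div, Measure.volume_eq_prod, integral_prod _ hint₃, integral_prod _ hint₂]
    _ = -∫ p, u p * fderiv ℝ u p (knothe (u ^ 4) (h ^ 2) c d p) := by
        rw [funext hsplit, integral_sq_mul_deriv_fst hu hu_supp hT₁, integral_add hint₁ hint₂]
        ring

lemma setIntegral_le_neg_integral_mul_fderiv (hu : ContDiff ℝ 1 u) (hu_supp : HasCompactSupport u)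
    (hh : Continuous h) (hh₀ : ∀ p, 0 < h p) (hcd : c < d)
    (hmass : ∫ p, u p ^ 4 = ∫ p in Icc c d ×ˢ Icc c d, h p ^ 2) :
    ∫ p in Icc c d ×ˢ Icc c d, h p ≤
      -∫ p, u p * fderiv ℝ u p (knothe (u ^ 4) (h ^ 2) c d p) :=
  calc ∫ p in Icc c d ×ˢ Icc c d, h p = ∫ p in Icc c d ×ˢ Icc c d, (h ^ 2) p * (h p)⁻¹ := by
        simp [pow_two, mul_inv_cancel_right₀ (hh₀ _).ne']
    _ = ∫ p, u p ^ 4 * (h (knothe (u ^ 4) (h ^ 2) c d p))⁻¹ :=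
        (integral_mul_comp_knothe (hu.continuous.pow 4) (hasCompactSupport_pow hu_supp four_ne_zero)
          (fun p ↦ (even_two_mul 2).pow_nonneg (u p)) (hh.pow 2) (fun p ↦ pow_pos (hh₀ p) 2) hcd
          hmass (hh.inv₀ fun p ↦ (hh₀ p).ne')).symm
    _ ≤ _ := integral_pow_four_mul_inv_le hu hu_supp hh hh₀ hcd hmass

end Transport

/-! ### Duality -/

/-- The Euclidean norm of the gradient of a function on `ℝ × ℝ`. It differs from the operator norm
of the derivative because `ℝ × ℝ` carries the sup norm. -/
def gradNorm (u : ℝ × ℝ → ℝ) (p : ℝ × ℝ) : ℝ :=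
  √(fderiv ℝ u p (1, 0) ^ 2 + fderiv ℝ u p (0, 1) ^ 2)

section Duality

variable {u h : ℝ × ℝ → ℝ} {c d : ℝ}

lemma continuous_gradNorm (hu : ContDiff ℝ 1 u) : Continuous (gradNorm u) := by
  have hdu (v : ℝ × ℝ) : Continuous fun p ↦ fderiv ℝ u p v :=
    (hu.continuous_fderiv one_ne_zero).clm_apply continuous_const
  exact (((hdu _).pow 2).add ((hdu _).pow 2)).sqrt

lemma hasCompactSupport_gradNorm (hu_supp : HasCompactSupport u) :
    HasCompactSupport (gradNorm u) :=
  (hu_supp.fderiv (𝕜 := ℝ)).comp_left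
    (g := fun L : ℝ × ℝ →L[ℝ] ℝ ↦ √(L (1, 0) ^ 2 + L (0, 1) ^ 2)) (by simp)

lemma abs_fderiv_apply_le (u : ℝ × ℝ → ℝ) (p q : ℝ × ℝ) :
    |fderiv ℝ u p q| ≤ gradNorm u p * √(q.1 ^ 2 + q.2 ^ 2) := by
  rw [clm_apply_eq_fst_add_snd, gradNorm, ← Real.sqrt_mul (by positivity)]
  refine Real.abs_le_sqrt ?_
  linarith [sq_nonneg (fderiv ℝ u p (1, 0) * q.2 - fderiv ℝ u p (0, 1) * q.1)]

lemma setIntegral_le_integral_gradNorm_mul (hu : ContDiff ℝ 1 u) (hu_supp : HasCompactSupport u)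
    (hh : Continuous h) (hh₀ : ∀ p, 0 < h p) (hcd : c < d)
    (hmass : ∫ p, u p ^ 4 = ∫ p in Icc c d ×ˢ Icc c d, h p ^ 2) :
    ∫ p in Icc c d ×ˢ Icc c d, h p ≤ ∫ p, gradNorm u p * (|u p| *
      √((knothe (u ^ 4) (h ^ 2) c d p).1 ^ 2 + (knothe (u ^ 4) (h ^ 2) c d p).2 ^ 2)) := by
  set T := knothe (u ^ 4) (h ^ 2) c d
  have hint : Integrable fun p ↦ gradNorm u p * |u p| * √((T p).1 ^ 2 + (T p).2 ^ 2) :=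
    integrable_mul_comp_knothe (φ := fun q ↦ √(q.1 ^ 2 + q.2 ^ 2)) (hu.continuous.pow 4)
      (hasCompactSupport_pow hu_supp four_ne_zero)
      (fun p ↦ (even_two_mul 2).pow_nonneg (u p)) (hh.pow 2) (fun p ↦ pow_pos (hh₀ p) 2) hcd
      (((continuous_gradNorm hu).mul hu.continuous.abs).integrable_of_hasCompactSupport
        (hasCompactSupport_gradNorm hu_supp).mul_right) (by fun_prop)
  simp only [mul_assoc] at hint
  calc ∫ p in Icc c d ×ˢ Icc c d, h p ≤ -∫ p, u p * fderiv ℝ u p (T p) :=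
        setIntegral_le_neg_integral_mul_fderiv hu hu_supp hh hh₀ hcd hmass
    _ ≤ ∫ p, |u p * fderiv ℝ u p (T p)| := (neg_le_abs _).trans abs_integral_le_integral_abs
    _ ≤ ∫ p, gradNorm u p * (|u p| * √((T p).1 ^ 2 + (T p).2 ^ 2)) := by
        refine integral_mono_of_nonneg (.of_forall fun p ↦ abs_nonneg _) hint
          (.of_forall fun p ↦ ?_)
        dsimp only
        rw [abs_mul, mul_left_comm]
        gcongr
        exact abs_fderiv_apply_le u p (T p)

lemma integral_abs_mul_sqrt_knothe_rpow_four (hu : Continuous u) (hu_supp : HasCompactSupport u)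
    (hh : Continuous h) (hh₀ : ∀ p, 0 < h p) (hcd : c < d)
    (hmass : ∫ p, u p ^ 4 = ∫ p in Icc c d ×ˢ Icc c d, h p ^ 2) :
    ∫ p, (|u p| * √((knothe (u ^ 4) (h ^ 2) c d p).1 ^ 2 +
        (knothe (u ^ 4) (h ^ 2) c d p).2 ^ 2)) ^ (4 : ℝ) =
      ∫ p in Icc c d ×ˢ Icc c d, h p ^ 2 * (p.1 ^ 2 + p.2 ^ 2) ^ 2 := by
  have hsqrt (q : ℝ × ℝ) : √(q.1 ^ 2 + q.2 ^ 2) ^ 4 = (q.1 ^ 2 + q.2 ^ 2) ^ 2 := by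
    rw [pow_mul _ 2 2, Real.sq_sqrt (by positivity)]
  simp only [Real.rpow_ofNat, mul_pow, hsqrt, Even.pow_abs (show Even 4 by decide)]
  exact integral_mul_comp_knothe (φ := fun q ↦ (q.1 ^ 2 + q.2 ^ 2) ^ 2) (hu.pow 4)
    (hasCompactSupport_pow hu_supp four_ne_zero) (fun p ↦ (even_two_mul 2).pow_nonneg (u p))
    (hh.pow 2) (fun p ↦ pow_pos (hh₀ p) 2) hcd hmass (by fun_prop)

lemma setIntegral_pow_four_le (hu : ContDiff ℝ 1 u) (hu_supp : HasCompactSupport u)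
    (hh : Continuous h) (hh₀ : ∀ p, 0 < h p) (hcd : c < d)
    (hmass : ∫ p, u p ^ 4 = ∫ p in Icc c d ×ˢ Icc c d, h p ^ 2) :
    (∫ p in Icc c d ×ˢ Icc c d, h p) ^ 4 ≤
      (∫ p, gradNorm u p ^ (4 / 3 : ℝ)) ^ 3 *
        ∫ p in Icc c d ×ˢ Icc c d, h p ^ 2 * (p.1 ^ 2 + p.2 ^ 2) ^ 2 := by
  set N := ∫ p, gradNorm u p ^ (4 / 3 : ℝ)
  set S := ∫ p in Icc c d ×ˢ Icc c d, h p ^ 2 * (p.1 ^ 2 + p.2 ^ 2) ^ 2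
  have hN : 0 ≤ N := integral_nonneg fun p ↦ Real.rpow_nonneg (Real.sqrt_nonneg _) _
  have hS : 0 ≤ S := integral_nonneg fun p ↦ by positivity
  have hJ : 0 ≤ ∫ p in Icc c d ×ˢ Icc c d, h p := integral_nonneg fun p ↦ (hh₀ p).le
  have hholder := integral_mul_le_Lp_mul_Lq_of_nonneg
    (Real.holderConjugate_iff.2 ⟨by norm_num, by norm_num⟩ : (4 / 3 : ℝ).HolderConjugate 4)
    (.of_forall fun p ↦ Real.sqrt_nonneg _)
    (.of_forall fun p ↦ mul_nonneg (abs_nonneg _) (Real.sqrt_nonneg _))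
    ((continuous_gradNorm hu).memLp_of_hasCompactSupport (hasCompactSupport_gradNorm hu_supp))
    (memLp_mul_comp_knothe (φ := fun q ↦ √(q.1 ^ 2 + q.2 ^ 2)) (hu.continuous.pow 4)
      (hasCompactSupport_pow hu_supp four_ne_zero) (fun p ↦ (even_two_mul 2).pow_nonneg (u p))
      (hh.pow 2) (fun p ↦ pow_pos (hh₀ p) 2) hcd
      (hu.continuous.abs.memLp_of_hasCompactSupport hu_supp.norm) (by fun_prop))
  rw [integral_abs_mul_sqrt_knothe_rpow_four hu.continuous hu_supp hh hh₀ hcd hmass,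
    one_div_div] at hholder
  calc (∫ p in Icc c d ×ˢ Icc c d, h p) ^ 4 ≤ (N ^ (3 / 4 : ℝ) * S ^ (1 / 4 : ℝ)) ^ 4 := by
        gcongr
        exact (setIntegral_le_integral_gradNorm_mul hu hu_supp hh hh₀ hcd hmass).trans hholder
    _ = N ^ 3 * S := by
        rw [mul_pow, ← Real.rpow_mul_natCast hN, ← Real.rpow_mul_natCast hS]
        norm_num

lemma integral_pow_four_mul_setIntegral_pow_four_le (hu : ContDiff ℝ 1 u)
    (hu_supp : HasCompactSupport u) (hh : Continuous h) (hh₀ : ∀ p, 0 < h p) (hcd : c < d) :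
    (∫ p, u p ^ 4) * (∫ p in Icc c d ×ˢ Icc c d, h p) ^ 4 ≤
      (∫ p, gradNorm u p ^ (4 / 3 : ℝ)) ^ 3 * ((∫ p in Icc c d ×ˢ Icc c d, h p ^ 2) *
        ∫ p in Icc c d ×ˢ Icc c d, h p ^ 2 * (p.1 ^ 2 + p.2 ^ 2) ^ 2) := by
  set I := ∫ p, u p ^ 4
  set Z := ∫ p in Icc c d ×ˢ Icc c d, h p ^ 2
  have hS : 0 ≤ ∫ p in Icc c d ×ˢ Icc c d, h p ^ 2 * (p.1 ^ 2 + p.2 ^ 2) ^ 2 :=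
    integral_nonneg fun p ↦ by positivity
  have hN : 0 ≤ ∫ p, gradNorm u p ^ (4 / 3 : ℝ) :=
    integral_nonneg fun p ↦ Real.rpow_nonneg (Real.sqrt_nonneg _) _
  have hZ : 0 < Z :=
    (integral_intervalIntegral_slice_pos (hh.pow 2) (fun p ↦ pow_pos (hh₀ p) 2) hcd).trans_eq
      (setIntegral_Icc_prod_Icc (hh.pow 2) hcd.le).symm
  rcases (integral_nonneg fun p ↦ (even_two_mul 2).pow_nonneg (u p) : 0 ≤ I).eq_or_lt with hI | hI
  · simp only [I, ← hI, zero_mul]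
    exact mul_nonneg (pow_nonneg hN 3) (mul_nonneg hZ.le hS)
  -- The inequality is homogeneous in `h`, so `h` may be rescaled to give `u⁴` and `h²` equal mass.
  obtain ⟨s, hs, hsZ⟩ : ∃ s > 0, s ^ 2 * Z = I :=
    ⟨√(I / Z), Real.sqrt_pos.2 (by positivity), by
      rw [Real.sq_sqrt (by positivity), div_mul_cancel₀ _ hZ.ne']⟩
  have hscaled := setIntegral_pow_four_le hu hu_supp (h := fun p ↦ s * h p)
    (continuous_const.mul hh) (fun p ↦ mul_pos hs (hh₀ p)) hcd
    (by simp only [mul_pow, integral_const_mul]; exact hsZ.symm)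
  simp only [mul_pow, mul_assoc, integral_const_mul] at hscaled
  refine le_of_mul_le_mul_left ?_ (pow_pos hs 2)
  rw [← hsZ]
  linear_combination Z * hscaled

end Duality

/-! ### Talenti's inequality -/

/-- The bubble `y ↦ 1 / (1 + |y|⁴)`. Its square is the fourth power of Talenti's extremal
`(1 + |y|⁴) ^ (-1 / 2)` for the embedding of `W^{1,4/3}` into `L⁴`. -/
def bubble (p : ℝ × ℝ) : ℝ := (1 + (p.1 ^ 2 + p.2 ^ 2) ^ 2)⁻¹

section Bubble

lemma bubble_pos (p : ℝ × ℝ) : 0 < bubble p := inv_pos.2 (by positivity)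

lemma continuous_bubble : Continuous bubble :=
  Continuous.inv₀ (by fun_prop) fun p ↦ by positivity

lemma integral_Ioi_mul_inv_one_add_pow_four :
    ∫ r in Ioi (0 : ℝ), r * (1 + r ^ 4)⁻¹ = Real.pi / 4 := by
  have hderiv (r : ℝ) : HasDerivAt (fun r ↦ Real.arctan (r ^ 2) / 2) (r * (1 + r ^ 4)⁻¹) r := by
    refine ((hasDerivAt_pow 2 r).arctan.div_const 2).congr_deriv ?_
    rw [← pow_mul, Nat.cast_ofNat]
    ring
  have hlim : Tendsto (fun r : ℝ ↦ Real.arctan (r ^ 2) / 2) atTop (𝓝 (Real.pi / 2 / 2)) :=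
    ((Real.tendsto_arctan_atTop.mono_right nhdsWithin_le_nhds).comp
      (tendsto_pow_atTop two_ne_zero)).div_const 2
  rw [integral_Ioi_of_hasDerivAt_of_nonneg' (fun r _ ↦ hderiv r)
    (fun r hr ↦ mul_nonneg hr.le (by positivity)) hlim, zero_pow two_ne_zero, Real.arctan_zero]
  ring

lemma integral_bubble : ∫ p, bubble p = Real.pi ^ 2 / 2 := by
  have hpolar (q : ℝ × ℝ) : q.1 • bubble (polarCoord.symm q) = q.1 * (1 + q.1 ^ 4)⁻¹ * 1 := by
    have hnorm : (q.1 * Real.cos q.2) ^ 2 + (q.1 * Real.sin q.2) ^ 2 = q.1 ^ 2 := by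
      linear_combination q.1 ^ 2 * Real.sin_sq_add_cos_sq q.2
    rw [polarCoord_symm_apply, bubble, hnorm, ← pow_mul, smul_eq_mul, mul_one]
  have hangle : ∫ _ in Ioo (-Real.pi) Real.pi, (1 : ℝ) = 2 * Real.pi := by
    simp [Real.pi_pos.le, two_mul]
  rw [← integral_comp_polarCoord_symm, funext hpolar, polarCoord_target, Measure.volume_eq_prod,
    setIntegral_prod_mul (fun r ↦ r * (1 + r ^ 4)⁻¹) (fun _ ↦ (1 : ℝ)),
    integral_Ioi_mul_inv_one_add_pow_four, hangle]
  ring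

lemma tendsto_setIntegral_bubble :
    Tendsto (fun R : ℝ ↦ ∫ p in Icc (-R) R ×ˢ Icc (-R) R, bubble p) atTop
      (𝓝 (Real.pi ^ 2 / 2)) := by
  have hint : Integrable bubble := .of_integral_ne_zero (by rw [integral_bubble]; positivity)
  have hball (R : ℝ) : Icc (-R) R ×ˢ Icc (-R) R = Metric.closedBall (0 : ℝ × ℝ) R := by
    rw [← Prod.mk_zero_zero, ← closedBall_prod_same, Real.closedBall_eq_Icc, zero_sub, zero_add]
  simp only [hball, ← integral_bubble]
  exact (aecover_closedBall tendsto_id).integral_tendsto_of_countably_generated hint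

lemma setIntegral_bubble_sq_mul_le (R : ℝ) :
    4 * ((∫ p in Icc (-R) R ×ˢ Icc (-R) R, bubble p ^ 2) *
        ∫ p in Icc (-R) R ×ˢ Icc (-R) R, bubble p ^ 2 * (p.1 ^ 2 + p.2 ^ 2) ^ 2) ≤
      (∫ p in Icc (-R) R ×ˢ Icc (-R) R, bubble p) ^ 2 := by
  have hint {φ : ℝ × ℝ → ℝ} (hφ : Continuous φ) : IntegrableOn φ (Icc (-R) R ×ˢ Icc (-R) R) :=
    hφ.continuousOn.integrableOn_compact (isCompact_Icc.prod isCompact_Icc)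
  have hbubble (p : ℝ × ℝ) : bubble p = bubble p ^ 2 + bubble p ^ 2 * (p.1 ^ 2 + p.2 ^ 2) ^ 2 := by
    rw [bubble]
    field_simp
  calc _ ≤ ((∫ p in Icc (-R) R ×ˢ Icc (-R) R, bubble p ^ 2) +
        ∫ p in Icc (-R) R ×ˢ Icc (-R) R, bubble p ^ 2 * (p.1 ^ 2 + p.2 ^ 2) ^ 2) ^ 2 := by
        rw [← mul_assoc]
        exact four_mul_le_sq_add _ _
    _ = (∫ p in Icc (-R) R ×ˢ Icc (-R) R, bubble p) ^ 2 := by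
        rw [← integral_add (hint (φ := fun p ↦ bubble p ^ 2) (continuous_bubble.pow 2))
          (hint (φ := fun p ↦ bubble p ^ 2 * (p.1 ^ 2 + p.2 ^ 2) ^ 2)
            ((continuous_bubble.pow 2).mul (by fun_prop)))]
        simp only [← hbubble]

variable {u : ℝ × ℝ → ℝ}

lemma pi_pow_four_mul_integral_pow_four_le (hu : ContDiff ℝ 1 u) (hu_supp : HasCompactSupport u) :
    Real.pi ^ 4 * ∫ p, u p ^ 4 ≤ (∫ p, gradNorm u p ^ (4 / 3 : ℝ)) ^ 3 := by
  set I := ∫ p, u p ^ 4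
  set N := ∫ p, gradNorm u p ^ (4 / 3 : ℝ)
  have hN : 0 ≤ N := integral_nonneg fun p ↦ Real.rpow_nonneg (Real.sqrt_nonneg _) _
  have hlim : Tendsto (fun R : ℝ ↦ 4 * I * (∫ p in Icc (-R) R ×ˢ Icc (-R) R, bubble p) ^ 2) atTop
      (𝓝 (Real.pi ^ 4 * I)) := by
    convert (tendsto_setIntegral_bubble.pow 2).const_mul (4 * I) using 2
    ring
  refine le_of_tendsto hlim ?_
  filter_upwards [tendsto_setIntegral_bubble.eventually_const_lt (by positivity),
    eventually_gt_atTop 0] with R hJ hR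
  have hdual := integral_pow_four_mul_setIntegral_pow_four_le hu hu_supp continuous_bubble
    bubble_pos (neg_lt_self hR)
  have hbubble := mul_le_mul_of_nonneg_left (setIntegral_bubble_sq_mul_le R) (pow_nonneg hN 3)
  refine le_of_mul_le_mul_right ?_ (pow_pos hJ 2)
  linear_combination 4 * hdual + hbubble

end Bubble

/-! ### The gradient of a function with compact support -/

section LpNorm

variable {α E : Type*} [MeasurableSpace α] {μ : Measure α} [NormedAddCommGroup E] {f : α → E}

lemma lpNorm_natCast_pow (hf : AEStronglyMeasurable f μ) {n : ℕ} (hn : n ≠ 0) :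
    lpNorm f n μ ^ n = ∫ x, ‖f x‖ ^ n ∂μ := by
  rw [lpNorm_eq_integral_norm_rpow_toReal (mod_cast hn) (ENNReal.natCast_ne_top n) hf,
    ENNReal.toReal_natCast, Real.rpow_inv_natCast_pow (integral_nonneg fun x ↦ by positivity) hn]
  simp only [Real.rpow_natCast]

lemma lpNorm_sq_two {g : α → ℝ} (hg : AEStronglyMeasurable g μ) :
    lpNorm (g ^ 2) 2 μ = lpNorm g 4 μ ^ 2 := by
  refine (pow_left_inj₀ lpNorm_nonneg (sq_nonneg _) two_ne_zero).1 ?_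
  calc lpNorm (g ^ 2) 2 μ ^ 2 = ∫ x, ‖(g ^ 2) x‖ ^ 2 ∂μ :=
        mod_cast lpNorm_natCast_pow (hg.pow 2) two_ne_zero
    _ = ∫ x, ‖g x‖ ^ 4 ∂μ := by simp only [Pi.pow_apply, norm_pow, ← pow_mul]
    _ = lpNorm g 4 μ ^ 4 := mod_cast (lpNorm_natCast_pow hg four_ne_zero).symm
    _ = (lpNorm g 4 μ ^ 2) ^ 2 := by rw [← pow_mul]

lemma lpNorm_le_lpNorm_mul_rpow_of_support_subset {s : Set α} {p q : ENNReal} (hpq : p ≤ q)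
    (hf : MemLp f q μ) (hf_sub : Function.support f ⊆ s) (hs : μ s ≠ ⊤) :
    lpNorm f p μ ≤ lpNorm f q μ * μ.real s ^ (1 / p.toReal - 1 / q.toReal) := by
  rcases eq_or_ne p 0 with rfl | hp
  · rw [lpNorm_exponent_zero]
    exact mul_nonneg lpNorm_nonneg (Real.rpow_nonneg measureReal_nonneg _)
  have hexp : 0 ≤ 1 / p.toReal - 1 / q.toReal := by
    rcases eq_or_ne q ⊤ with rfl | hq
    · simp
    · exact sub_nonneg.2 (one_div_le_one_div_of_le
        (ENNReal.toReal_pos hp (ne_top_of_le_ne_top hq hpq)) (ENNReal.toReal_mono hq hpq))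
  have hrestrict (r : ENNReal) : eLpNorm f r (μ.restrict s) = eLpNorm f r μ :=
    eLpNorm_restrict_eq_of_support_subset hf_sub
  have hle := eLpNorm_le_eLpNorm_mul_rpow_measure_univ (μ := μ.restrict s) hpq hf.1.restrict
  rw [hrestrict, hrestrict, Measure.restrict_apply_univ] at hle
  have hreal := ENNReal.toReal_mono
    (ENNReal.mul_ne_top hf.eLpNorm_ne_top (ENNReal.rpow_ne_top_of_nonneg hexp hs)) hle
  rwa [ENNReal.toReal_mul, ← ENNReal.toReal_rpow, toReal_eLpNorm hf.1, toReal_eLpNorm hf.1] at hreal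

end LpNorm

/-- The identification of the Euclidean plane with `ℝ × ℝ` by coordinates. -/
def euclideanPlaneEquivProd : EuclideanSpace ℝ (Fin 2) ≃L[ℝ] ℝ × ℝ :=
  (EuclideanSpace.equiv (Fin 2) ℝ).trans (.finTwoArrow ℝ ℝ)

section EuclideanPlane

variable {f : EuclideanSpace ℝ (Fin 2) → ℝ}

lemma measurePreserving_euclideanPlaneEquivProd :
    MeasurePreserving euclideanPlaneEquivProd volume volume :=
  (volume_preserving_finTwoArrow ℝ).comp (PiLp.volume_preserving_ofLp (Fin 2))

lemma integral_comp_euclideanPlaneEquivProd_symm (g : EuclideanSpace ℝ (Fin 2) → ℝ) :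
    ∫ p, g (euclideanPlaneEquivProd.symm p) = ∫ x, g x := by
  rw [← measurePreserving_euclideanPlaneEquivProd.integral_comp
    euclideanPlaneEquivProd.toHomeomorph.measurableEmbedding]
  simp

lemma norm_fderiv_sq (f : EuclideanSpace ℝ (Fin 2) → ℝ) (x : EuclideanSpace ℝ (Fin 2)) :
    ‖fderiv ℝ f x‖ ^ 2 = grad2 f x := by
  rw [← (InnerProductSpace.toDual ℝ _).symm.norm_map, EuclideanSpace.real_norm_sq_eq]
  refine Finset.sum_congr rfl fun i _ ↦ ?_
  rw [pd, ← InnerProductSpace.toDual_symm_apply, EuclideanSpace.inner_single_right]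
  simp

lemma gradNorm_comp_euclideanPlaneEquivProd_symm (f : EuclideanSpace ℝ (Fin 2) → ℝ) (p : ℝ × ℝ) :
    gradNorm (f ∘ euclideanPlaneEquivProd.symm) p =
      ‖fderiv ℝ f (euclideanPlaneEquivProd.symm p)‖ := by
  have h₀ : euclideanPlaneEquivProd.symm (1, 0) = EuclideanSpace.single 0 1 := by
    ext i; fin_cases i <;> simp [euclideanPlaneEquivProd]
  have h₁ : euclideanPlaneEquivProd.symm (0, 1) = EuclideanSpace.single 1 1 := by
    ext i; fin_cases i <;> simp [euclideanPlaneEquivProd]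
  rw [gradNorm, ContinuousLinearEquiv.comp_right_fderiv, ← Real.sqrt_sq (norm_nonneg _),
    norm_fderiv_sq, grad2, Fin.sum_univ_two]
  simp [pd, h₀, h₁]

lemma pi_mul_lpNorm_four_le (hf : ContDiff ℝ 1 f) (hf_supp : HasCompactSupport f) :
    Real.pi * lpNorm f 4 volume ≤ lpNorm (fderiv ℝ f) (4 / 3) volume := by
  have htalenti := pi_pow_four_mul_integral_pow_four_le
    (hf.comp euclideanPlaneEquivProd.symm.contDiff)
    (hf_supp.comp_homeomorph euclideanPlaneEquivProd.symm.toHomeomorph)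
  simp only [gradNorm_comp_euclideanPlaneEquivProd_symm, Function.comp_apply,
    integral_comp_euclideanPlaneEquivProd_symm (fun x ↦ f x ^ 4),
    integral_comp_euclideanPlaneEquivProd_symm (fun x ↦ ‖fderiv ℝ f x‖ ^ (4 / 3 : ℝ))] at htalenti
  have hB : 0 ≤ ∫ x, ‖fderiv ℝ f x‖ ^ (4 / 3 : ℝ) := integral_nonneg fun x ↦ by positivity
  have hf_pow : lpNorm f 4 volume ^ 4 = ∫ x, f x ^ 4 := by
    simpa [Even.pow_abs (show Even 4 by decide)] using
      lpNorm_natCast_pow hf.continuous.aestronglyMeasurable four_ne_zero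
  have hdf_pow : lpNorm (fderiv ℝ f) (4 / 3) volume ^ 4 =
      (∫ x, ‖fderiv ℝ f x‖ ^ (4 / 3 : ℝ)) ^ 3 := by
    rw [lpNorm_eq_integral_norm_rpow_toReal (by simp) (by finiteness)
      (hf.continuous_fderiv one_ne_zero).aestronglyMeasurable, ENNReal.toReal_div,
      ENNReal.toReal_ofNat, ENNReal.toReal_ofNat, ← Real.rpow_mul_natCast hB]
    norm_num
  refine le_of_pow_le_pow_left₀ four_ne_zero lpNorm_nonneg ?_
  rwa [mul_pow, hf_pow, hdf_pow]

lemma lpNorm_four_le_of_tsupport_subset {Ω : Set (EuclideanSpace ℝ (Fin 2))}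
    (hΩ : volume Ω ≠ ⊤) (hf : ContDiff ℝ 1 f) (hf_supp : HasCompactSupport f)
    (hf_sub : tsupport f ⊆ Ω) :
    lpNorm f 4 volume ≤
      volume.real Ω ^ (1 / 4 : ℝ) / Real.pi * lpNorm (fderiv ℝ f) 2 volume := by
  have hholder := lpNorm_le_lpNorm_mul_rpow_of_support_subset (p := 4 / 3) (q := 2)
    (by rw [ENNReal.div_le_iff] <;> norm_num)
    ((hf.continuous_fderiv one_ne_zero).memLp_of_hasCompactSupport (hf_supp.fderiv ℝ))
    ((support_fderiv_subset ℝ).trans hf_sub) hΩ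
  have hexp : 1 / (4 / 3 : ENNReal).toReal - 1 / (2 : ENNReal).toReal = 1 / 4 := by norm_num
  rw [hexp] at hholder
  have htalenti := pi_mul_lpNorm_four_le hf hf_supp
  rw [div_mul_eq_mul_div, le_div_iff₀ Real.pi_pos]
  linarith

end EuclideanPlane

lemma hess2_eq_sum_grad2 (v : EuclideanSpace ℝ (Fin 2) → ℝ) (x : EuclideanSpace ℝ (Fin 2)) :
    hess2 v x = ∑ j, grad2 (pd v j) x :=
  Finset.sum_comm

section PartialDerivatives

variable {v : EuclideanSpace ℝ (Fin 2) → ℝ}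

lemma continuous_pd (hv : ContDiff ℝ 1 v) (j : Fin 2) : Continuous (pd v j) :=
  (hv.continuous_fderiv one_ne_zero).clm_apply continuous_const

lemma contDiff_pd (hv : ContDiff ℝ 2 v) (j : Fin 2) : ContDiff ℝ 1 (pd v j) :=
  (hv.fderiv_right (by norm_num)).clm_apply contDiff_const

lemma tsupport_pd_subset (v : EuclideanSpace ℝ (Fin 2) → ℝ) (j : Fin 2) :
    tsupport (pd v j) ⊆ tsupport v :=
  tsupport_fderiv_apply_subset ℝ _

lemma pd_eq_zero {x : EuclideanSpace ℝ (Fin 2)} (hx : x ∉ tsupport v) {j : Fin 2} :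
    pd v j x = 0 :=
  image_eq_zero_of_notMem_tsupport fun h ↦ hx (tsupport_pd_subset v j h)

lemma hasCompactSupport_pd (hv_supp : HasCompactSupport v) (j : Fin 2) :
    HasCompactSupport (pd v j) :=
  hv_supp.fderiv_apply ℝ _

lemma lpNorm_grad2_le (hv : ContDiff ℝ 1 v) (hv_supp : HasCompactSupport v) :
    lpNorm (grad2 v) 2 volume ≤ ∑ j, lpNorm (pd v j) 4 volume ^ 2 := by
  have hgrad2 : grad2 v = ∑ j, pd v j ^ 2 := by
    ext x
    simp [grad2]
  calc lpNorm (grad2 v) 2 volume ≤ ∑ j, lpNorm (pd v j ^ 2) 2 volume := by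
        rw [hgrad2]
        exact lpNorm_sum_le (fun j _ ↦ ((continuous_pd hv j).pow 2).memLp_of_hasCompactSupport
          (hasCompactSupport_pow (hasCompactSupport_pd hv_supp j) two_ne_zero)) one_le_two
    _ = ∑ j, lpNorm (pd v j) 4 volume ^ 2 := by
        simp only [lpNorm_sq_two (continuous_pd hv _).aestronglyMeasurable]

lemma sum_lpNorm_fderiv_pd_sq (hv : ContDiff ℝ 2 v) (hv_supp : HasCompactSupport v) :
    ∑ j, lpNorm (fderiv ℝ (pd v j)) 2 volume ^ 2 = ∫ x, hess2 v x := by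
  have hcont (j : Fin 2) : Continuous (fderiv ℝ (pd v j)) :=
    (contDiff_pd hv j).continuous_fderiv one_ne_zero
  have hsq (j : Fin 2) : lpNorm (fderiv ℝ (pd v j)) 2 volume ^ 2 = ∫ x, grad2 (pd v j) x := by
    simpa only [Nat.cast_ofNat, norm_fderiv_sq] using
      lpNorm_natCast_pow (hcont j).aestronglyMeasurable two_ne_zero
  have hint (j : Fin 2) : Integrable (grad2 (pd v j)) := by
    simpa only [norm_fderiv_sq] using ((hcont j).memLp_of_hasCompactSupport
      ((hasCompactSupport_pd hv_supp j).fderiv ℝ)).integrable_norm_pow two_ne_zero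
  simp only [hsq, hess2_eq_sum_grad2, integral_finsetSum Finset.univ fun j _ ↦ hint j]

lemma lpNorm_grad2_le_mul_integral_hess2 {Ω : Set (EuclideanSpace ℝ (Fin 2))}
    (hΩ : volume Ω ≠ ⊤) (hv : ContDiff ℝ 2 v) (hv_supp : HasCompactSupport v)
    (hv_sub : tsupport v ⊆ Ω) :
    lpNorm (grad2 v) 2 volume ≤
      (volume.real Ω ^ (1 / 4 : ℝ) / Real.pi) ^ 2 * ∫ x, hess2 v x :=
  calc lpNorm (grad2 v) 2 volume ≤ ∑ j, lpNorm (pd v j) 4 volume ^ 2 :=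
        lpNorm_grad2_le (hv.of_le one_le_two) hv_supp
    _ ≤ ∑ j, (volume.real Ω ^ (1 / 4 : ℝ) / Real.pi *
          lpNorm (fderiv ℝ (pd v j)) 2 volume) ^ 2 := by
        gcongr with j
        · exact lpNorm_nonneg
        · exact lpNorm_four_le_of_tsupport_subset hΩ (contDiff_pd hv j)
            (hasCompactSupport_pd hv_supp j) ((tsupport_pd_subset v j).trans hv_sub)
    _ = (volume.real Ω ^ (1 / 4 : ℝ) / Real.pi) ^ 2 * ∫ x, hess2 v x := by
        simp only [mul_pow, ← Finset.mul_sum, sum_lpNorm_fderiv_pd_sq hv hv_supp]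

lemma setIntegral_grad2_sq {Ω : Set (EuclideanSpace ℝ (Fin 2))} (hv : ContDiff ℝ 1 v)
    (hv_sub : tsupport v ⊆ Ω) :
    ∫ x in Ω, grad2 v x ^ 2 = lpNorm (grad2 v) 2 volume ^ 2 := by
  have hcont : Continuous (grad2 v) :=
    continuous_finsetSum _ fun j _ ↦ (continuous_pd hv j).pow 2
  have hzero : ∀ x ∉ Ω, grad2 v x ^ 2 = 0 := fun x hx ↦ by
    simp [grad2, pd_eq_zero fun h ↦ hx (hv_sub h)]
  rw [setIntegral_eq_integral_of_forall_compl_eq_zero hzero]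
  simpa only [Nat.cast_ofNat, Real.norm_eq_abs, sq_abs] using
    (lpNorm_natCast_pow hcont.aestronglyMeasurable two_ne_zero).symm

lemma setIntegral_hess2 {Ω : Set (EuclideanSpace ℝ (Fin 2))} (hv_sub : tsupport v ⊆ Ω) :
    ∫ x in Ω, hess2 v x = ∫ x, hess2 v x := by
  refine setIntegral_eq_integral_of_forall_compl_eq_zero fun x hx ↦ ?_
  have hzero (i j : Fin 2) : pd (pd v j) i x = 0 :=
    pd_eq_zero fun h ↦ hx (hv_sub (tsupport_pd_subset v j h))
  simp [hess2_eq_sum_grad2, grad2, hzero]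

end PartialDerivatives

theorem grad_L4_le_general {Ω : Set (EuclideanSpace ℝ (Fin 2))} (hΩ : volume Ω ≠ ⊤)
    {v : EuclideanSpace ℝ (Fin 2) → ℝ} (hv : ContDiff ℝ 2 v)
    (hsupp : HasCompactSupport v) (hsub : tsupport v ⊆ Ω) :
    (∫ x in Ω, (grad2 v x) ^ 2) ^ ((1 : ℝ) / 4) ≤
      (volume Ω).toReal ^ ((1 : ℝ) / 4) / Real.pi * Real.sqrt (∫ x in Ω, hess2 v x) := by
  have hH : 0 ≤ ∫ x, hess2 v x :=
    integral_nonneg fun x ↦ Finset.sum_nonneg fun i _ ↦ Finset.sum_nonneg fun j _ ↦ sq_nonneg _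
  rw [setIntegral_grad2_sq (hv.of_le one_le_two) hsub, setIntegral_hess2 hsub, one_div,
    Real.rpow_inv_le_iff_of_pos (by positivity) (by positivity) four_pos]
  calc lpNorm (grad2 v) 2 volume ^ 2
      ≤ ((volume.real Ω ^ (1 / 4 : ℝ) / Real.pi) ^ 2 * ∫ x, hess2 v x) ^ 2 := by
        gcongr
        · exact lpNorm_nonneg
        · exact lpNorm_grad2_le_mul_integral_hess2 hΩ hv hsupp hsub
    _ = ((volume Ω).toReal ^ (4⁻¹ : ℝ) / Real.pi * √(∫ x, hess2 v x)) ^ (4 : ℝ) := by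
        rw [Real.rpow_ofNat, mul_pow _ _ 4, pow_mul √_ 2 2, Real.sq_sqrt hH, one_div,
          measureReal_def]
        ring

/-- For `v ∈ H²₀(Ω)` (here a smooth function compactly supported in `Ω`),
`‖∇v‖_{L⁴(Ω)} ≤ (|Ω|^{1/4}/π) ‖D²v‖_{L²(Ω)}`. -/
theorem grad_L4_le (Ω : Set (EuclideanSpace ℝ (Fin 2))) (hΩ : IsOpen Ω)
    (hbdd : Bornology.IsBounded Ω)
    (v : EuclideanSpace ℝ (Fin 2) → ℝ) (hv : ContDiff ℝ (⊤ : ℕ∞) v)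
    (hsupp : HasCompactSupport v) (hsub : tsupport v ⊆ Ω) :
    (∫ x in Ω, (grad2 v x) ^ 2) ^ ((1 : ℝ) / 4) ≤
      (volume Ω).toReal ^ ((1 : ℝ) / 4) / Real.pi * Real.sqrt (∫ x in Ω, hess2 v x) :=
  grad_L4_le_general hbdd.measure_lt_top.ne (contDiff_infty.1 hv 2) hsupp hsub

end
end

section
/- Define on V = H²₀(Ω), Ω ⊂ ℝ² bounded open, the trilinear form Γ(v,w,φ) = ∫_Ω Δv (curl w · ∇φ) dx, where curl w = (∂w/∂y, −∂w/∂x). Then for all v, w, φ ∈ V, |Γ(v,w,φ)| ≤ (|Ω|^{1/2}/π²) ‖D²v‖_{L²} ‖D²w‖_{L²} ‖D²φ‖_{L²}. -/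
open MeasureTheory

noncomputable section

/-- Laplacian `Δf`. -/
def lap (f : EuclideanSpace ℝ (Fin 2) → ℝ) (x : EuclideanSpace ℝ (Fin 2)) : ℝ :=
  pd2 f 0 0 x + pd2 f 1 1 x

/-- Trilinear form `Γ(v,w,φ) = ∫_Ω Δv (curl w · ∇φ)` with
`curl w = (∂w/∂y, −∂w/∂x)`, so `curl w · ∇φ = ∂w/∂y ∂φ/∂x − ∂w/∂x ∂φ/∂y`. -/
def Gam (Ω : Set (EuclideanSpace ℝ (Fin 2))) (v w φ : EuclideanSpace ℝ (Fin 2) → ℝ) : ℝ :=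
  ∫ x in Ω, lap v x * (pd w 1 x * pd φ 0 x - pd w 0 x * pd φ 1 x)

/-- A smooth function compactly supported in `Ω`, a proxy for membership in `H²₀(Ω)`. -/
def IsTest (Ω : Set (EuclideanSpace ℝ (Fin 2))) (φ : EuclideanSpace ℝ (Fin 2) → ℝ) : Prop :=
  ContDiff ℝ (⊤ : ℕ∞) φ ∧ HasCompactSupport φ ∧ tsupport φ ⊆ Ω
/-!
By Cauchy–Schwarz and Plancherel (`‖Δv‖ = ‖D²v‖`) it suffices to bound the `L²` norm of the Jacobian
determinant of `(φ, w)` by `|Ω|^{1/2} / π² ‖Δφ‖ ‖Δw‖`. On the Fourier side this determinant is the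
convolution of the two transforms weighted by `t ∧ ξ`. Insert the weights `|t|² + q` and
`|ξ - t|² + q` and apply Cauchy–Schwarz: what is left is the kernel integral
`∫ (t ∧ ξ)² / ((|t|² + q) (|ξ - t|² + q))² dt ≤ π / (8 q)`, which Feynman's parametrization
`1 / (a b)² = ∫₀¹ 6 x (1 - x) / ((1 - x) a + x b)⁴ dx` reduces to a radial integral.

The terms in `q` cost lower-order norms. As `f` is supported in `Ω`, its transform is at most
`|Ω|^{1/2} ‖f‖` everywhere, so its `L²` mass cannot concentrate at low frequencies, which gives
Poincaré inequalities with explicit constants. For gradients, averaging over quarter turns halves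
the constant, because the derivatives in two orthogonal directions share the energy `‖∇f‖²`.
Optimizing over `q` is unnecessary: `q = 1 / (4π|Ω|)` leaves the factor `169 π² / 8 < 256`.
-/

open Set Filter Topology FourierTransform SchwartzMap LineDeriv Laplacian
open scoped ENNReal RealInnerProductSpace ContDiff

section CauchySchwarz

variable {α F : Type*} [MeasurableSpace α] {μ : Measure α} [NormedAddCommGroup F]

lemma sq_lintegral_mul_le_lintegral_sq_mul_lintegral_sq {f g : α → ℝ≥0∞}
    (hf : AEMeasurable f μ) (hg : AEMeasurable g μ) :
    (∫⁻ x, f x * g x ∂μ) ^ 2 ≤ (∫⁻ x, f x ^ 2 ∂μ) * ∫⁻ x, g x ^ 2 ∂μ := by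
  have sq_rpow_half (a : ℝ≥0∞) : (a ^ (1 / 2 : ℝ)) ^ 2 = a := by
    rw [← ENNReal.rpow_natCast, ← ENNReal.rpow_mul]
    norm_num
  have holder := ENNReal.lintegral_mul_le_Lp_mul_Lq μ Real.HolderConjugate.two_two hf hg
  simp only [ENNReal.rpow_ofNat, Pi.mul_apply] at holder
  simpa only [mul_pow, sq_rpow_half] using pow_le_pow_left' holder 2

lemma lintegral_enorm_sq_eq_ofReal {f : α → F} (hf : MemLp f 2 μ) :
    ∫⁻ x, ‖f x‖ₑ ^ 2 ∂μ = ENNReal.ofReal (∫ x, ‖f x‖ ^ 2 ∂μ) := by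
  rw [ofReal_integral_eq_lintegral_ofReal (hf.integrable_norm_pow two_ne_zero)
    (ae_of_all _ fun x ↦ by positivity)]
  simp only [ENNReal.ofReal_pow (norm_nonneg _), ofReal_norm]

lemma sq_norm_integral_le_measureReal_mul [NormedSpace ℝ F] [IsFiniteMeasure μ] {f : α → F}
    (hf : MemLp f 2 μ) :
    ‖∫ x, f x ∂μ‖ ^ 2 ≤ μ.real univ * ∫ x, ‖f x‖ ^ 2 ∂μ := by
  rw [← ENNReal.ofReal_le_ofReal_iff (by positivity), ENNReal.ofReal_mul measureReal_nonneg,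
    ← lintegral_enorm_sq_eq_ofReal hf, ENNReal.ofReal_pow (norm_nonneg _), ofReal_norm]
  calc ‖∫ x, f x ∂μ‖ₑ ^ 2 ≤ (∫⁻ x, 1 * ‖f x‖ₑ ∂μ) ^ 2 := by
        simpa only [one_mul] using pow_le_pow_left' (enorm_integral_le_lintegral_enorm f) 2
    _ ≤ (∫⁻ _, 1 ^ 2 ∂μ) * ∫⁻ x, ‖f x‖ₑ ^ 2 ∂μ :=
        sq_lintegral_mul_le_lintegral_sq_mul_lintegral_sq aemeasurable_const
          hf.aestronglyMeasurable.enorm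
    _ = ENNReal.ofReal (μ.real univ) * ∫⁻ x, ‖f x‖ₑ ^ 2 ∂μ := by simp

lemma abs_integral_mul_le_sqrt_mul_sqrt {f g : α → ℝ} (hf : MemLp f 2 μ) (hg : MemLp g 2 μ) :
    |∫ x, f x * g x ∂μ| ≤ √(∫ x, f x ^ 2 ∂μ) * √(∫ x, g x ^ 2 ∂μ) := by
  have holder := integral_mul_norm_le_Lp_mul_Lq Real.HolderConjugate.two_two
    (by simpa using hf) (by simpa using hg)
  simp only [Real.rpow_ofNat, Real.norm_eq_abs, sq_abs, ← Real.sqrt_eq_rpow, ← abs_mul] at holder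
  exact abs_integral_le_integral_abs.trans holder

lemma lintegral_sq_bilinear_convolution_le {G : Type*} [AddCommGroup G] [MeasurableSpace G]
    [MeasurableAdd₂ G] [MeasurableNeg G] {ν : Measure G} [SFinite ν] [ν.IsAddRightInvariant]
    {k : G → G → ℝ≥0∞} {f g : G → ℝ≥0∞} {K : ℝ≥0∞} (hk : ∀ ξ, Measurable (k ξ))
    (hK : ∀ ξ, ∫⁻ t, k ξ t ^ 2 ∂ν ≤ K) (hf : Measurable f) (hg : Measurable g) :
    ∫⁻ ξ, (∫⁻ t, k ξ t * (f t * g (ξ - t)) ∂ν) ^ 2 ∂ν ≤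
      K * ((∫⁻ t, f t ^ 2 ∂ν) * ∫⁻ t, g t ^ 2 ∂ν) := by
  calc ∫⁻ ξ, (∫⁻ t, k ξ t * (f t * g (ξ - t)) ∂ν) ^ 2 ∂ν
      ≤ ∫⁻ ξ, K * ∫⁻ t, f t ^ 2 * g (ξ - t) ^ 2 ∂ν ∂ν := by
        refine lintegral_mono fun ξ ↦ ?_
        simp only [← mul_pow]
        exact (sq_lintegral_mul_le_lintegral_sq_mul_lintegral_sq (hk ξ).aemeasurable
          (by fun_prop)).trans (mul_le_mul_left (hK ξ) _)
    _ = K * ∫⁻ t, ∫⁻ ξ, f t ^ 2 * g (ξ - t) ^ 2 ∂ν ∂ν := by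
        rw [lintegral_const_mul _ (by fun_prop), lintegral_lintegral_swap (by fun_prop)]
    _ = K * ((∫⁻ t, f t ^ 2 ∂ν) * ∫⁻ t, g t ^ 2 ∂ν) := by
        rw [← lintegral_mul_const _ (by fun_prop)]
        congr! 3 with t
        rw [lintegral_const_mul _ (by fun_prop), lintegral_sub_right_eq_self (g · ^ 2) t]

end CauchySchwarz

section Plane

attribute [local instance] FiniteDimensional.of_fact_finrank_eq_two

variable {E : Type*} [NormedAddCommGroup E] [InnerProductSpace ℝ E]
  [Fact (Module.finrank ℝ E = 2)] (o : Orientation ℝ E (Fin 2))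

lemma areaForm_eq_of_orthonormalBasis (b : OrthonormalBasis (Fin 2) ℝ E) (x y : E) :
    b.toBasis.orientation.areaForm x y = ⟪x, b 0⟫ * ⟪y, b 1⟫ - ⟪x, b 1⟫ * ⟪y, b 0⟫ := by
  rw [Orientation.areaForm_to_volumeForm, Orientation.volumeForm_robust _ b rfl,
    Module.Basis.det_apply, Matrix.det_fin_two]
  simp [Module.Basis.toMatrix_apply, OrthonormalBasis.repr_apply_apply, real_inner_comm]
  ring

lemma areaForm_sq_add_areaForm_rightAngleRotation_sq (x y : E) :
    o.areaForm x y ^ 2 + o.areaForm (o.rightAngleRotation x) y ^ 2 = ‖x‖ ^ 2 * ‖y‖ ^ 2 := by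
  rw [o.areaForm_rightAngleRotation_left, neg_sq, add_comm, o.inner_sq_add_areaForm_sq]

lemma inner_sq_add_inner_rightAngleRotation_sq (x y : E) :
    ⟪x, y⟫ ^ 2 + ⟪x, o.rightAngleRotation y⟫ ^ 2 = ‖x‖ ^ 2 * ‖y‖ ^ 2 := by
  rw [o.inner_rightAngleRotation_right, neg_sq, o.inner_sq_add_areaForm_sq]

lemma continuous_areaForm_left (y : E) : Continuous fun x ↦ o.areaForm x y :=
  (o.areaForm.flip y).continuous_of_finiteDimensional

variable [MeasurableSpace E] [BorelSpace E]

lemma integral_comp_rightAngleRotation (g : E → ℝ) :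
    ∫ x, g (o.rightAngleRotation x) = ∫ x, g x :=
  o.rightAngleRotation.measurePreserving.integral_comp
    o.rightAngleRotation.toMeasurableEquiv.measurableEmbedding g

lemma integrable_comp_rightAngleRotation {g : E → ℝ} (hg : Integrable g) :
    Integrable fun x ↦ g (o.rightAngleRotation x) :=
  o.rightAngleRotation.measurePreserving.integrable_comp_of_integrable hg

lemma two_mul_integral_eq_integral_add_comp_rightAngleRotation {g : E → ℝ} (hg : Integrable g) :
    2 * ∫ x, g x = ∫ x, (g x + g (o.rightAngleRotation x)) := by
  rw [integral_add hg (integrable_comp_rightAngleRotation o hg),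
    integral_comp_rightAngleRotation, two_mul]

lemma integral_radial_eq_two_pi_mul (f : ℝ → ℝ) :
    ∫ x : E, f ‖x‖ = 2 * Real.pi * ∫ r in Ioi (0 : ℝ), r * f r := by
  have finrank_eq_two : Module.finrank ℝ E = 2 := Fact.out
  have : Nontrivial E := Module.nontrivial_of_finrank_pos (R := ℝ) (by simp [finrank_eq_two])
  have volume_ball : (volume : Measure E).real (Metric.ball 0 1) = Real.pi := by
    rw [Measure.real, InnerProductSpace.volume_ball_of_dim_even (k := 1) finrank_eq_two,
      finrank_eq_two]
    simp [Real.pi_pos.le]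
  rw [integral_fun_norm_addHaar, volume_ball, finrank_eq_two]
  simp only [Nat.add_one_sub_one, pow_one, nsmul_eq_mul, smul_eq_mul, Nat.cast_ofNat]
  ring

lemma integrable_radial_iff (f : ℝ → ℝ) :
    Integrable (fun x : E ↦ f ‖x‖) ↔ IntegrableOn (fun r ↦ r * f r) (Ioi 0) := by
  have finrank_eq_two : Module.finrank ℝ E = 2 := Fact.out
  have : Nontrivial E := Module.nontrivial_of_finrank_pos (R := ℝ) (by simp [finrank_eq_two])
  rw [integrable_fun_norm_addHaar volume, finrank_eq_two]
  simp only [Nat.add_one_sub_one, pow_one, smul_eq_mul]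

lemma areaForm_sq_mul_radial_integrable {f : ℝ → ℝ} (hf : Measurable f)
    (hfi : Integrable fun s : E ↦ ‖s‖ ^ 2 * f ‖s‖) (ξ : E) :
    Integrable fun s ↦ o.areaForm s ξ ^ 2 * f ‖s‖ := by
  have areaForm_measurable := (continuous_areaForm_left o ξ).measurable
  have integrand_measurable : Measurable fun s ↦ o.areaForm s ξ ^ 2 * f ‖s‖ := by fun_prop
  refine (hfi.const_mul (‖ξ‖ ^ 2)).mono integrand_measurable.aestronglyMeasurable
    (ae_of_all _ fun s ↦ ?_)
  simp only [norm_mul, ← mul_assoc]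
  gcongr
  simp only [norm_pow, Real.norm_eq_abs, ← mul_pow]
  gcongr
  simpa [mul_comm] using o.abs_areaForm_le s ξ

lemma integral_areaForm_sq_mul_radial {f : ℝ → ℝ} (hf : Measurable f)
    (hfi : Integrable fun s : E ↦ ‖s‖ ^ 2 * f ‖s‖) (ξ : E) :
    ∫ s, o.areaForm s ξ ^ 2 * f ‖s‖ = ‖ξ‖ ^ 2 / 2 * ∫ s : E, ‖s‖ ^ 2 * f ‖s‖ := by
  have average := two_mul_integral_eq_integral_add_comp_rightAngleRotation o
    (areaForm_sq_mul_radial_integrable o hf hfi ξ)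
  simp only [LinearIsometryEquiv.norm_map, ← add_mul,
    areaForm_sq_add_areaForm_rightAngleRotation_sq, mul_right_comm _ (‖ξ‖ ^ 2)] at average
  rw [integral_mul_const] at average
  linarith

end Plane

section KernelIntegrals

attribute [local instance] FiniteDimensional.of_fact_finrank_eq_two

lemma integrable_max_zero_one_sub_norm_sq_div {V : Type*} [NormedAddCommGroup V]
    [InnerProductSpace ℝ V] [FiniteDimensional ℝ V] [MeasurableSpace V] [BorelSpace V] {ρ : ℝ}
    (hρ : 0 < ρ) :
    Integrable fun x : V ↦ max 0 (1 - ‖x‖ ^ 2 / ρ ^ 2) := by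
  refine Continuous.integrable_of_hasCompactSupport (by fun_prop)
    (HasCompactSupport.intro (isCompact_closedBall 0 ρ) fun x hx ↦ max_eq_left ?_)
  rw [mem_closedBall_zero_iff, not_le] at hx
  rw [sub_nonpos, one_le_div (by positivity)]
  gcongr

variable {E : Type*} [NormedAddCommGroup E] [InnerProductSpace ℝ E]
  [Fact (Module.finrank ℝ E = 2)] [MeasurableSpace E] [BorelSpace E]

lemma hasDerivAt_cube_div_sq_add_pow_four_primitive {M : ℝ} (hM : 0 < M) (r : ℝ) :
    HasDerivAt (fun r ↦ -(1 / 4) * ((r ^ 2 + M)⁻¹) ^ 2 + M / 6 * ((r ^ 2 + M)⁻¹) ^ 3)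
      (r * (r ^ 2 / (r ^ 2 + M) ^ 4)) r := by
  have base_ne : r ^ 2 + M ≠ 0 := by positivity
  have base : HasDerivAt (fun r : ℝ ↦ (r ^ 2 + M)⁻¹) (-(2 * r) / (r ^ 2 + M) ^ 2) r := by
    simpa using ((hasDerivAt_pow 2 r).add_const M).fun_inv base_ne
  convert! ((base.pow 2).const_mul (-(1 / 4))).add ((base.pow 3).const_mul (M / 6)) using 1
  simp only [Nat.cast_ofNat, Nat.add_one_sub_one, pow_one]
  field_simp
  ring

lemma tendsto_inv_sq_add_atTop (M : ℝ) : Tendsto (fun r : ℝ ↦ (r ^ 2 + M)⁻¹) atTop (𝓝 0) :=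
  (tendsto_atTop_add_const_right _ M (tendsto_pow_atTop two_ne_zero)).inv_tendsto_atTop

lemma norm_sq_div_norm_sq_add_pow_four_integrable_and_integral_eq {M : ℝ} (hM : 0 < M) :
    Integrable (fun s : E ↦ ‖s‖ ^ 2 * (1 / (‖s‖ ^ 2 + M) ^ 4)) ∧
      ∫ s : E, ‖s‖ ^ 2 * (1 / (‖s‖ ^ 2 + M) ^ 4) = Real.pi / (6 * M ^ 2) := by
  have nonneg : ∀ r ∈ Ioi (0 : ℝ), 0 ≤ r * (r ^ 2 / (r ^ 2 + M) ^ 4) := fun r hr ↦ by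
    have : 0 < r := hr
    positivity
  have primitive_tendsto := ((tendsto_inv_sq_add_atTop M).pow 2).const_mul (-(1 / 4)) |>.add
    (((tendsto_inv_sq_add_atTop M).pow 3).const_mul (M / 6))
  have primitive (r : ℝ) (_ : r ∈ Ici 0) := hasDerivAt_cube_div_sq_add_pow_four_primitive hM r
  simp only [mul_one_div]
  refine ⟨(integrable_radial_iff fun r ↦ r ^ 2 / (r ^ 2 + M) ^ 4).2
    (integrableOn_Ioi_deriv_of_nonneg' primitive nonneg primitive_tendsto), ?_⟩
  rw [integral_radial_eq_two_pi_mul fun r ↦ r ^ 2 / (r ^ 2 + M) ^ 4,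
    integral_Ioi_of_hasDerivAt_of_nonneg' primitive nonneg primitive_tendsto]
  field_simp
  ring

lemma integral_max_zero_one_sub_norm_sq_div {ρ : ℝ} (hρ : 0 < ρ) :
    ∫ x : E, max 0 (1 - ‖x‖ ^ 2 / ρ ^ 2) = Real.pi * ρ ^ 2 / 2 := by
  have tent_outside (r : ℝ) (hr : r ∈ Ioi 0 \ Ioc 0 ρ) : r * max 0 (1 - r ^ 2 / ρ ^ 2) = 0 := by
    have : ρ < r := not_le.1 fun h ↦ hr.2 ⟨hr.1, h⟩
    rw [max_eq_left, mul_zero]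
    rw [sub_nonpos, one_le_div (by positivity)]
    gcongr
  have tent_inside (r : ℝ) (hr : r ∈ Ioc 0 ρ) :
      r * max 0 (1 - r ^ 2 / ρ ^ 2) = r - r ^ 3 / ρ ^ 2 := by
    rw [max_eq_right]
    · ring
    · rw [sub_nonneg, div_le_one (by positivity)]
      exact pow_le_pow_left₀ hr.1.le hr.2 2
  have polynomial_integral : ∫ r in (0)..ρ, (r - r ^ 3 / ρ ^ 2) = ρ ^ 2 / 4 := by
    rw [intervalIntegral.integral_sub (by simp)
      (Continuous.intervalIntegrable (by fun_prop) _ _), intervalIntegral.integral_div,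
      integral_id, integral_pow]
    field_simp
    ring
  rw [integral_radial_eq_two_pi_mul fun r ↦ max 0 (1 - r ^ 2 / ρ ^ 2),
    setIntegral_eq_of_subset_of_forall_sdiff_eq_zero measurableSet_Ioi Ioc_subset_Ioi_self
      tent_outside,
    setIntegral_congr_fun measurableSet_Ioc tent_inside, ← intervalIntegral.integral_of_le hρ.le,
    polynomial_integral]
  ring

end KernelIntegrals

section Feynman

lemma one_sub_mul_add_mul_pos {a b x : ℝ} (ha : 0 < a) (hb : 0 < b) (hx : x ∈ Icc (0 : ℝ) 1) :
    0 < (1 - x) * a + x * b :=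
  convex_Ioi (0 : ℝ) ha hb (sub_nonneg.2 hx.2) hx.1 (sub_add_cancel 1 x)

lemma continuousOn_feynman_integrand {a b : ℝ} (ha : 0 < a) (hb : 0 < b) :
    ContinuousOn (fun x ↦ 6 * x * (1 - x) / ((1 - x) * a + x * b) ^ 4) (Icc 0 1) :=
  ContinuousOn.div (by fun_prop) (by fun_prop) fun _ hx ↦
    (pow_pos (one_sub_mul_add_mul_pos ha hb hx) 4).ne'

lemma integral_feynman {a b : ℝ} (ha : 0 < a) (hb : 0 < b) :
    ∫ x in (0)..1, 6 * x * (1 - x) / ((1 - x) * a + x * b) ^ 4 = 1 / (a * b) ^ 2 := by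
  let y (x : ℝ) : ℝ := x / ((1 - x) * a + x * b)
  have primitive (x : ℝ) (hx : x ∈ uIcc 0 1) :
      HasDerivAt (fun x ↦ (3 * y x ^ 2 - 2 * b * y x ^ 3) / a ^ 2)
        (6 * x * (1 - x) / ((1 - x) * a + x * b) ^ 4) x := by
    rw [uIcc_of_le zero_le_one] at hx
    have denominator_ne := (one_sub_mul_add_mul_pos ha hb hx).ne'
    have denominator_deriv : HasDerivAt (fun x : ℝ ↦ (1 - x) * a + x * b) (-1 * a + 1 * b) x :=
      (((hasDerivAt_id x).const_sub 1).mul_const a).add ((hasDerivAt_id x).mul_const b)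
    have y_deriv : HasDerivAt y (a / ((1 - x) * a + x * b) ^ 2) x := by
      convert! (hasDerivAt_id x).div denominator_deriv denominator_ne using 1
      simp only [id_eq]
      ring
    convert! (((y_deriv.pow 2).const_mul 3).sub
      ((y_deriv.pow 3).const_mul (2 * b))).div_const (a ^ 2) using 1
    simp only [y, Nat.cast_ofNat, Nat.add_one_sub_one, pow_one]
    field_simp
    ring
  rw [intervalIntegral.integral_eq_sub_of_hasDerivAt primitive
    (ContinuousOn.intervalIntegrable_of_Icc zero_le_one (continuousOn_feynman_integrand ha hb))]
  simp only [y, sub_self, zero_mul, one_mul, zero_add, zero_div]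
  field_simp
  norm_num

lemma lintegral_feynman {a b : ℝ} (ha : 0 < a) (hb : 0 < b) :
    ∫⁻ x in Ioc (0 : ℝ) 1, ENNReal.ofReal (6 * x * (1 - x) / ((1 - x) * a + x * b) ^ 4) =
      ENNReal.ofReal (1 / (a * b) ^ 2) := by
  rw [← integral_feynman ha hb, intervalIntegral.integral_of_le zero_le_one,
    ofReal_integral_eq_lintegral_ofReal
      ((continuousOn_feynman_integrand ha hb).integrableOn_Icc.mono_set Ioc_subset_Icc_self)]
  refine (ae_restrict_iff' measurableSet_Ioc).2 (ae_of_all _ fun x hx ↦ ?_)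
  have := one_sub_mul_add_mul_pos ha hb (Ioc_subset_Icc_self hx)
  have := hx.1.le
  have := sub_nonneg.2 hx.2
  simp only [Pi.zero_apply]
  positivity

end Feynman

section KernelBound

attribute [local instance] FiniteDimensional.of_fact_finrank_eq_two

lemma one_sub_mul_norm_sq_add_mul_norm_sub_sq {V : Type*} [NormedAddCommGroup V]
    [InnerProductSpace ℝ V] (ξ t : V) (x q : ℝ) :
    (1 - x) * (‖t‖ ^ 2 + q) + x * (‖ξ - t‖ ^ 2 + q) =
      ‖t - x • ξ‖ ^ 2 + (x * (1 - x) * ‖ξ‖ ^ 2 + q) := by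
  rw [norm_sub_sq_real, norm_sub_sq_real, norm_smul, mul_pow, Real.norm_eq_abs, sq_abs,
    real_inner_smul_right, real_inner_comm]
  ring

variable {E : Type*} [NormedAddCommGroup E] [InnerProductSpace ℝ E]
  [Fact (Module.finrank ℝ E = 2)] (o : Orientation ℝ E (Fin 2))
  [MeasurableSpace E] [BorelSpace E]

lemma lintegral_areaForm_sq_div_norm_sq_add_pow_four {M : ℝ} (hM : 0 < M) (ξ : E) :
    ∫⁻ s, ENNReal.ofReal (o.areaForm s ξ ^ 2 * (1 / (‖s‖ ^ 2 + M) ^ 4)) =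
      ENNReal.ofReal (‖ξ‖ ^ 2 * Real.pi / (12 * M ^ 2)) := by
  obtain ⟨radial_integrable, radial_integral⟩ :=
    norm_sq_div_norm_sq_add_pow_four_integrable_and_integral_eq (E := E) hM
  have measurable_profile : Measurable fun r : ℝ ↦ 1 / (r ^ 2 + M) ^ 4 := by fun_prop
  rw [← ofReal_integral_eq_lintegral_ofReal
    (areaForm_sq_mul_radial_integrable o measurable_profile radial_integrable ξ)
    (ae_of_all _ fun s ↦ by positivity),
    integral_areaForm_sq_mul_radial o measurable_profile radial_integrable, radial_integral]
  congr 1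
  field_simp
  ring

lemma lintegral_areaForm_sq_mul_feynman_integrand_le {q : ℝ} (hq : 0 < q) (ξ : E) {x : ℝ}
    (hx : x ∈ Icc (0 : ℝ) 1) :
    ∫⁻ t, ENNReal.ofReal (o.areaForm t ξ ^ 2 *
        (6 * x * (1 - x) / ((1 - x) * (‖t‖ ^ 2 + q) + x * (‖ξ - t‖ ^ 2 + q)) ^ 4)) ≤
      ENNReal.ofReal (Real.pi / (8 * q)) := by
  have hx0 := hx.1
  have hx1 := sub_nonneg.2 hx.2
  let m := x * (1 - x) * ‖ξ‖ ^ 2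
  have : 0 ≤ m := by positivity
  calc ∫⁻ t, ENNReal.ofReal (o.areaForm t ξ ^ 2 *
        (6 * x * (1 - x) / ((1 - x) * (‖t‖ ^ 2 + q) + x * (‖ξ - t‖ ^ 2 + q)) ^ 4))
      = ∫⁻ t, ENNReal.ofReal (6 * x * (1 - x)) * ENNReal.ofReal
          (o.areaForm (t - x • ξ) ξ ^ 2 * (1 / (‖t - x • ξ‖ ^ 2 + (m + q)) ^ 4)) := by
        congr! 2 with t
        rw [one_sub_mul_norm_sq_add_mul_norm_sub_sq, map_sub, map_smul, LinearMap.sub_apply,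
          LinearMap.smul_apply, o.areaForm_apply_self, smul_zero, sub_zero,
          ← ENNReal.ofReal_mul (by positivity)]
        congr 1
        ring
    _ = ENNReal.ofReal (6 * x * (1 - x) * (‖ξ‖ ^ 2 * Real.pi / (12 * (m + q) ^ 2))) := by
        rw [lintegral_const_mul' _ _ ENNReal.ofReal_ne_top, lintegral_sub_right_eq_self
          (fun t ↦ ENNReal.ofReal (o.areaForm t ξ ^ 2 * (1 / (‖t‖ ^ 2 + (m + q)) ^ 4))),
          lintegral_areaForm_sq_div_norm_sq_add_pow_four o (by positivity),
          ← ENNReal.ofReal_mul (by positivity)]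
    _ ≤ ENNReal.ofReal (Real.pi / (8 * q)) := by
        refine ENNReal.ofReal_le_ofReal ?_
        rw [show 6 * x * (1 - x) * (‖ξ‖ ^ 2 * Real.pi / (12 * (m + q) ^ 2)) =
          Real.pi * m / (2 * (m + q) ^ 2) by simp only [m]; field_simp; ring,
          div_le_div_iff₀ (by positivity) (by positivity)]
        linear_combination 2 * Real.pi * sq_nonneg (m - q)

lemma lintegral_areaForm_div_sq_le {q : ℝ} (hq : 0 < q) (ξ : E) :
    ∫⁻ t, ENNReal.ofReal ((o.areaForm t ξ / ((‖t‖ ^ 2 + q) * (‖ξ - t‖ ^ 2 + q))) ^ 2) ≤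
      ENNReal.ofReal (Real.pi / (8 * q)) := by
  have areaForm_measurable := (continuous_areaForm_left o ξ).measurable
  calc ∫⁻ t, ENNReal.ofReal ((o.areaForm t ξ / ((‖t‖ ^ 2 + q) * (‖ξ - t‖ ^ 2 + q))) ^ 2)
      = ∫⁻ t, ∫⁻ x in Ioc (0 : ℝ) 1, ENNReal.ofReal (o.areaForm t ξ ^ 2 *
          (6 * x * (1 - x) / ((1 - x) * (‖t‖ ^ 2 + q) + x * (‖ξ - t‖ ^ 2 + q)) ^ 4)) := by
        congr! 2 with t
        simp_rw [ENNReal.ofReal_mul (sq_nonneg (o.areaForm t ξ))]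
        rw [lintegral_const_mul' _ _ ENNReal.ofReal_ne_top,
          lintegral_feynman (by positivity) (by positivity),
          ← ENNReal.ofReal_mul (by positivity), mul_one_div, div_pow]
    _ = ∫⁻ x in Ioc (0 : ℝ) 1, ∫⁻ t, ENNReal.ofReal (o.areaForm t ξ ^ 2 *
          (6 * x * (1 - x) / ((1 - x) * (‖t‖ ^ 2 + q) + x * (‖ξ - t‖ ^ 2 + q)) ^ 4)) :=
        lintegral_lintegral_swap (by fun_prop)
    _ ≤ ∫⁻ _ in Ioc (0 : ℝ) 1, ENNReal.ofReal (Real.pi / (8 * q)) :=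
        setLIntegral_mono' measurableSet_Ioc fun x hx ↦
          lintegral_areaForm_sq_mul_feynman_integrand_le o hq ξ (Ioc_subset_Icc_self hx)
    _ = ENNReal.ofReal (Real.pi / (8 * q)) := by simp

end KernelBound

section Fourier

variable {V : Type*} [NormedAddCommGroup V] [InnerProductSpace ℝ V]

/-- The Jacobian determinant `∂ₐf ∂_b g - ∂_b f ∂ₐg` of `(f, g)` in the directions `a`, `b`. -/
def jacobianDet (a b : V) (f g : 𝓢(V, ℂ)) : 𝓢(V, ℂ) :=
  pairing (ContinuousLinearMap.mul ℂ ℂ) (∂_{a} f) (∂_{b} g) -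
    pairing (ContinuousLinearMap.mul ℂ ℂ) (∂_{b} f) (∂_{a} g)

lemma jacobianDet_apply (a b : V) (f g : 𝓢(V, ℂ)) (x : V) :
    jacobianDet a b f g x =
      (∂_{a} f : 𝓢(V, ℂ)) x * (∂_{b} g : 𝓢(V, ℂ)) x -
        (∂_{b} f : 𝓢(V, ℂ)) x * (∂_{a} g : 𝓢(V, ℂ)) x := rfl

lemma jacobianDet_eq_zero_of_notMem_tsupport (a b : V) {f : 𝓢(V, ℂ)} (g : 𝓢(V, ℂ)) {x : V}
    (hx : x ∉ tsupport f) : jacobianDet a b f g x = 0 := by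
  have lineDeriv_eq_zero (m : V) : (∂_{m} f : 𝓢(V, ℂ)) x = 0 :=
    image_eq_zero_of_notMem_tsupport fun h ↦ hx (tsupport_lineDerivOp_subset m f h)
  rw [jacobianDet_apply, lineDeriv_eq_zero, lineDeriv_eq_zero, zero_mul, zero_mul, sub_zero]

variable [FiniteDimensional ℝ V] [MeasurableSpace V] [BorelSpace V]

lemma integrable_norm_pow_mul_norm_sq (u : 𝓢(V, ℂ)) (k : ℕ) :
    Integrable fun x ↦ ‖x‖ ^ k * ‖u x‖ ^ 2 := by
  refine ((u.integrable_pow_mul volume k).mul_bdd (c := SchwartzMap.seminorm ℝ 0 0 u)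
    u.continuous.norm.aestronglyMeasurable (ae_of_all _ fun x ↦ ?_)).congr
    (ae_of_all _ fun x ↦ ?_)
  · simpa only [norm_norm] using norm_le_seminorm ℝ u x
  · simp only [sq, mul_assoc]

lemma memLp_norm_sq_add_mul_norm (u : 𝓢(V, ℂ)) (q : ℝ) :
    MemLp (fun t ↦ (‖t‖ ^ 2 + q) * ‖u t‖) 2 := by
  have weight_hasTemperateGrowth : (fun t : V ↦ ‖t‖ ^ 2 + q).HasTemperateGrowth := by fun_prop
  refine (memLp_congr_norm (Continuous.aestronglyMeasurable (by fun_prop))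
    (SchwartzMap.continuous _).aestronglyMeasurable (ae_of_all _ fun t ↦ ?_)).2
    ((smulLeftCLM ℂ (fun t : V ↦ ‖t‖ ^ 2 + q) u).memLp 2)
  rw [smulLeftCLM_apply_apply weight_hasTemperateGrowth, norm_smul, norm_mul, norm_norm]

lemma integral_norm_sq_fourierInv (f : 𝓢(V, ℂ)) :
    ∫ ξ, ‖(𝓕⁻ f : 𝓢(V, ℂ)) ξ‖ ^ 2 = ∫ x, ‖f x‖ ^ 2 := by
  rw [← integral_norm_sq_fourier (𝓕⁻ f), fourier_fourierInv_eq]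

lemma sq_norm_fourierInv_le_measureReal_mul {Ω : Set V} (hΩ : volume Ω ≠ ⊤) {f : 𝓢(V, ℂ)}
    (hf : tsupport f ⊆ Ω) (ξ : V) :
    ‖(𝓕⁻ f : 𝓢(V, ℂ)) ξ‖ ^ 2 ≤ volume.real Ω * ∫ x, ‖f x‖ ^ 2 := by
  have : IsFiniteMeasure (volume.restrict Ω) := isFiniteMeasure_restrict.2 hΩ
  have vanish (x : V) (hx : x ∉ Ω) : f x = 0 := image_eq_zero_of_notMem_tsupport fun h ↦ hx (hf h)
  have memLp : MemLp (fun x ↦ Real.fourierChar ⟪x, ξ⟫ • f x) 2 (volume.restrict Ω) :=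
    (memLp_congr_norm (Continuous.aestronglyMeasurable (by fun_prop))
      f.continuous.aestronglyMeasurable (ae_of_all _ fun x ↦ Circle.norm_smul _ _)).2
      ((f.memLp 2).restrict Ω)
  have transform_eq : (𝓕⁻ f : 𝓢(V, ℂ)) ξ = ∫ x in Ω, Real.fourierChar ⟪x, ξ⟫ • f x := by
    rw [fourierInv_coe, Real.fourierInv_eq,
      setIntegral_eq_integral_of_forall_compl_eq_zero fun x hx ↦ by rw [vanish x hx, smul_zero]]
  have energy_eq : ∫ x in Ω, ‖f x‖ ^ 2 = ∫ x, ‖f x‖ ^ 2 :=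
    setIntegral_eq_integral_of_forall_compl_eq_zero fun x hx ↦ by simp [vanish x hx]
  rw [transform_eq, ← energy_eq]
  simpa [Circle.norm_smul] using sq_norm_integral_le_measureReal_mul memLp

lemma fourierInv_lineDerivOp_apply (f : 𝓢(V, ℂ)) (m ξ : V) :
    (𝓕⁻ (∂_{m} f) : 𝓢(V, ℂ)) ξ =
      -(2 * Real.pi * Complex.I) * (⟪ξ, m⟫ * (𝓕⁻ f : 𝓢(V, ℂ)) ξ) := by
  have : (fun x : V ↦ ⟪x, m⟫).HasTemperateGrowth := by fun_prop
  simp [fourierInv_lineDerivOp_eq, smulLeftCLM_apply_apply this]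

lemma norm_sq_fourierInv_lineDerivOp (f : 𝓢(V, ℂ)) (m ξ : V) :
    ‖(𝓕⁻ (∂_{m} f) : 𝓢(V, ℂ)) ξ‖ ^ 2 =
      4 * Real.pi ^ 2 * (⟪ξ, m⟫ ^ 2 * ‖(𝓕⁻ f : 𝓢(V, ℂ)) ξ‖ ^ 2) := by
  simp only [fourierInv_lineDerivOp_apply, norm_mul, norm_neg, Complex.norm_real, Complex.norm_I,
    Complex.norm_ofNat, mul_pow, Real.norm_eq_abs, sq_abs]
  ring

lemma fourierInv_laplacian_apply (f : 𝓢(V, ℂ)) (ξ : V) :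
    (𝓕⁻ (Δ f) : 𝓢(V, ℂ)) ξ = (-(4 * Real.pi ^ 2 * ‖ξ‖ ^ 2) : ℝ) * (𝓕⁻ f : 𝓢(V, ℂ)) ξ := by
  let b := stdOrthonormalBasis ℝ V
  rw [SchwartzMap.laplacian_eq_sum b, fourierInv_sum, sum_apply]
  simp only [fourierInv_lineDerivOp_apply, ← b.sum_sq_inner_left ξ, Complex.ofReal_neg,
    Complex.ofReal_mul, Complex.ofReal_sum, Complex.ofReal_pow, Finset.mul_sum, Finset.sum_mul,
    ← Finset.sum_neg_distrib, neg_mul]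
  refine Finset.sum_congr rfl fun i _ ↦ ?_
  push_cast
  linear_combination (4 * Real.pi ^ 2 * ⟪ξ, b i⟫ ^ 2 * (𝓕⁻ f : 𝓢(V, ℂ)) ξ : ℂ) * Complex.I_sq

/-- The squared `L²` norm of the `k`-th order derivatives of `f`, read off on the Fourier side and
without the factor `(2π) ^ (2k)`. The inverse transform is used because it turns products into
convolutions. -/
def sobolevEnergy (k : ℕ) (f : 𝓢(V, ℂ)) : ℝ :=
  ∫ ξ, ‖ξ‖ ^ (2 * k) * ‖(𝓕⁻ f : 𝓢(V, ℂ)) ξ‖ ^ 2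

lemma sobolevEnergy_nonneg (k : ℕ) (f : 𝓢(V, ℂ)) : 0 ≤ sobolevEnergy k f :=
  integral_nonneg fun _ ↦ by positivity

lemma sobolevEnergy_zero (f : 𝓢(V, ℂ)) : sobolevEnergy 0 f = ∫ x, ‖f x‖ ^ 2 := by
  simp only [sobolevEnergy, mul_zero, pow_zero, one_mul, integral_norm_sq_fourierInv]

-- The derivative of `f` in the direction `ξ` has the transform `⟪ξ, ξ⟫ 𝓕⁻ f ξ` at `ξ`.
lemma norm_pow_four_mul_norm_sq_fourierInv_le {Ω : Set V} (hΩ : volume Ω ≠ ⊤)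
    {f : 𝓢(V, ℂ)} (hf : tsupport f ⊆ Ω) (ξ : V) :
    4 * Real.pi ^ 2 * (‖ξ‖ ^ 4 * ‖(𝓕⁻ f : 𝓢(V, ℂ)) ξ‖ ^ 2) ≤
      volume.real Ω * sobolevEnergy 0 (∂_{ξ} f) := by
  have bound := sq_norm_fourierInv_le_measureReal_mul hΩ
    ((SchwartzMap.tsupport_lineDerivOp_subset ξ f).trans hf) ξ
  rw [norm_sq_fourierInv_lineDerivOp, real_inner_self_eq_norm_sq, ← pow_mul] at bound
  rwa [sobolevEnergy_zero]

lemma sum_sobolevEnergy_lineDerivOp {ι : Type*} [Fintype ι] (b : OrthonormalBasis ι ℝ V) (k : ℕ)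
    (f : 𝓢(V, ℂ)) :
    ∑ i, sobolevEnergy k (∂_{b i} f) = 4 * Real.pi ^ 2 * sobolevEnergy (k + 1) f := by
  simp only [sobolevEnergy]
  rw [← integral_finsetSum _ fun _ _ ↦ integrable_norm_pow_mul_norm_sq _ _, ← integral_const_mul]
  congr! 2
  simp only [norm_sq_fourierInv_lineDerivOp, ← Finset.mul_sum, ← Finset.sum_mul,
    b.sum_sq_inner_left]
  ring

lemma integral_norm_sq_laplacian (f : 𝓢(V, ℂ)) :
    ∫ x, ‖(Δ f : 𝓢(V, ℂ)) x‖ ^ 2 = 16 * Real.pi ^ 4 * sobolevEnergy 2 f := by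
  rw [← integral_norm_sq_fourierInv, sobolevEnergy, ← integral_const_mul]
  congr! 2
  rw [fourierInv_laplacian_apply, norm_mul, Complex.norm_real, Real.norm_eq_abs, mul_pow, sq_abs]
  ring

lemma fourierInv_mul_apply (f g : 𝓢(V, ℂ)) (ξ : V) :
    (𝓕⁻ (pairing (ContinuousLinearMap.mul ℂ ℂ) f g) : 𝓢(V, ℂ)) ξ =
      ∫ t, (𝓕⁻ f : 𝓢(V, ℂ)) t * (𝓕⁻ g : 𝓢(V, ℂ)) (ξ - t) := by
  have product_eq : pairing (ContinuousLinearMap.mul ℂ ℂ) f g =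
      𝓕 (SchwartzMap.convolution (ContinuousLinearMap.mul ℂ ℂ) (𝓕⁻ f) (𝓕⁻ g)) := by
    rw [SchwartzMap.fourier_convolution, fourier_fourierInv_eq, fourier_fourierInv_eq]
  rw [product_eq, fourierInv_fourier_eq, SchwartzMap.convolution_apply]
  rfl

lemma integrable_mul_comp_sub_left (u v : 𝓢(V, ℂ)) (ξ : V) :
    Integrable fun t ↦ u t * v (ξ - t) :=
  u.integrable.mul_bdd (c := SchwartzMap.seminorm ℝ 0 0 v)
    (v.continuous.comp (by fun_prop)).aestronglyMeasurable
    (ae_of_all _ fun _ ↦ norm_le_seminorm ℝ v _)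

-- The frequencies of the two factors add up to `ξ`, so the symbol of the determinant, a priori
-- `t ∧ (ξ - t)`, equals `t ∧ ξ`.
lemma fourierInv_jacobianDet_apply (a b : V) (f g : 𝓢(V, ℂ)) (ξ : V) :
    (𝓕⁻ (jacobianDet a b f g) : 𝓢(V, ℂ)) ξ =
      ∫ t, (-(4 * Real.pi ^ 2) * (⟪t, a⟫ * ⟪ξ, b⟫ - ⟪t, b⟫ * ⟪ξ, a⟫) : ℝ) *
        ((𝓕⁻ f : 𝓢(V, ℂ)) t * (𝓕⁻ g : 𝓢(V, ℂ)) (ξ - t)) := by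
  rw [jacobianDet, ← fourierInvCLM_apply (R := ℂ), map_sub, fourierInvCLM_apply,
    fourierInvCLM_apply, sub_apply, fourierInv_mul_apply, fourierInv_mul_apply,
    ← integral_sub (integrable_mul_comp_sub_left _ _ _) (integrable_mul_comp_sub_left _ _ _)]
  congr! 2 with t
  simp only [fourierInv_lineDerivOp_apply, inner_sub_left]
  push_cast
  linear_combination (4 * Real.pi ^ 2 * (⟪t, a⟫ * ⟪ξ, b⟫ - ⟪t, b⟫ * ⟪ξ, a⟫) *
    (𝓕⁻ f : 𝓢(V, ℂ)) t * (𝓕⁻ g : 𝓢(V, ℂ)) (ξ - t) : ℂ) * Complex.I_sq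

end Fourier

section Poincare

attribute [local instance] FiniteDimensional.of_fact_finrank_eq_two

variable {E : Type*} [NormedAddCommGroup E] [InnerProductSpace ℝ E]
  [Fact (Module.finrank ℝ E = 2)] [MeasurableSpace E] [BorelSpace E]
  (o : Orientation ℝ E (Fin 2))

-- Split `1 ≤ ‖x‖² / ρ² + max 0 (1 - ‖x‖² / ρ²)` and average the second part over quarter turns.
lemma integral_le_second_moment_div_add {g : E → ℝ} {C ρ : ℝ} (hρ : 0 < ρ) (g_nonneg : 0 ≤ g)
    (hg : Integrable g) (hg₂ : Integrable fun x ↦ ‖x‖ ^ 2 * g x)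
    (hC : ∀ x, g x + g (o.rightAngleRotation x) ≤ 2 * C) :
    ∫ x, g x ≤ (∫ x, ‖x‖ ^ 2 * g x) / ρ ^ 2 + C * (Real.pi * ρ ^ 2 / 2) := by
  let tent (x : E) : ℝ := max 0 (1 - ‖x‖ ^ 2 / ρ ^ 2)
  have tent_mul_integrable : Integrable fun x ↦ tent x * g x := by
    refine hg.bdd_mul (c := 1) (Continuous.aestronglyMeasurable (by fun_prop))
      (ae_of_all _ fun x ↦ ?_)
    rw [Real.norm_of_nonneg (le_max_left _ _)]
    exact max_le zero_le_one (sub_le_self _ (by positivity))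
  have tent_mul_le : ∫ x, tent x * g x ≤ C * (Real.pi * ρ ^ 2 / 2) := by
    refine le_of_mul_le_mul_left ?_ (zero_lt_two' ℝ)
    rw [two_mul_integral_eq_integral_add_comp_rightAngleRotation o tent_mul_integrable, ← mul_assoc,
      ← integral_max_zero_one_sub_norm_sq_div (E := E) hρ, ← integral_const_mul]
    refine integral_mono
      (tent_mul_integrable.add (integrable_comp_rightAngleRotation o tent_mul_integrable))
      ((integrable_max_zero_one_sub_norm_sq_div hρ).const_mul _) fun x ↦ ?_
    simp only [tent, LinearIsometryEquiv.norm_map, ← mul_add]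
    exact (mul_le_mul_of_nonneg_left (hC x) (le_max_left _ _)).trans_eq (mul_comm _ _)
  calc ∫ x, g x ≤ ∫ x, (‖x‖ ^ 2 * g x / ρ ^ 2 + tent x * g x) := by
        refine integral_mono hg ((hg₂.div_const _).add tent_mul_integrable) fun x ↦ ?_
        linear_combination mul_le_mul_of_nonneg_right
          (le_max_right 0 (1 - ‖x‖ ^ 2 / ρ ^ 2)) (g_nonneg x)
    _ = (∫ x, ‖x‖ ^ 2 * g x) / ρ ^ 2 + ∫ x, tent x * g x := by
        rw [integral_add (hg₂.div_const _) tent_mul_integrable, integral_div]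
    _ ≤ (∫ x, ‖x‖ ^ 2 * g x) / ρ ^ 2 + C * (Real.pi * ρ ^ 2 / 2) := by gcongr

lemma sq_integral_le_mul_second_moment {g : E → ℝ} {C : ℝ} (g_nonneg : 0 ≤ g)
    (hg : Integrable g) (hg₂ : Integrable fun x ↦ ‖x‖ ^ 2 * g x)
    (hC : ∀ x, g x + g (o.rightAngleRotation x) ≤ 2 * C) :
    (∫ x, g x) ^ 2 ≤ 2 * Real.pi * C * ∫ x, ‖x‖ ^ 2 * g x := by
  have integral_nonneg' : 0 ≤ ∫ x, g x := integral_nonneg g_nonneg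
  have moment_nonneg : 0 ≤ ∫ x, ‖x‖ ^ 2 * g x :=
    integral_nonneg fun x ↦ mul_nonneg (sq_nonneg _) (g_nonneg x)
  have C_nonneg : 0 ≤ C := by
    refine nonneg_of_mul_nonneg_right ?_ (zero_lt_two' ℝ)
    exact (add_nonneg (g_nonneg _) (g_nonneg _)).trans (hC 0)
  have quadratic_nonneg (s : ℝ) : 0 ≤ Real.pi * C / 2 * (s * s) + -(∫ x, g x) * s +
      ∫ x, ‖x‖ ^ 2 * g x := by
    rcases le_or_gt s 0 with hs | hs
    · linear_combination mul_nonneg integral_nonneg' (neg_nonneg.2 hs) + moment_nonneg +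
        mul_nonneg (mul_nonneg Real.pi_pos.le C_nonneg) (mul_self_nonneg s) / 2
    · have bound := integral_le_second_moment_div_add o (Real.sqrt_pos.2 hs) g_nonneg hg hg₂ hC
      rw [Real.sq_sqrt hs.le, ← sub_le_iff_le_add, le_div_iff₀ hs] at bound
      linear_combination bound
  have discriminant_nonpos := discrim_le_zero quadratic_nonneg
  rw [discrim] at discriminant_nonpos
  linear_combination discriminant_nonpos

lemma sobolevEnergy_zero_lineDerivOp_add_rightAngleRotation (f : 𝓢(E, ℂ)) (η : E) :
    sobolevEnergy 0 (∂_{η} f) + sobolevEnergy 0 (∂_{o.rightAngleRotation η} f) =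
      4 * Real.pi ^ 2 * ‖η‖ ^ 2 * sobolevEnergy 1 f := by
  simp only [sobolevEnergy]
  rw [← integral_add (integrable_norm_pow_mul_norm_sq _ _) (integrable_norm_pow_mul_norm_sq _ _),
    ← integral_const_mul]
  congr 1 with ξ
  simp only [norm_sq_fourierInv_lineDerivOp]
  linear_combination 4 * Real.pi ^ 2 * ‖(𝓕⁻ f : 𝓢(E, ℂ)) ξ‖ ^ 2 *
    inner_sq_add_inner_rightAngleRotation_sq o ξ η

variable {Ω : Set E} {f : 𝓢(E, ℂ)}

lemma norm_sq_mul_norm_sq_fourierInv_add_rightAngleRotation_le (hΩ : volume Ω ≠ ⊤)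
    (hf : tsupport f ⊆ Ω) (ξ : E) :
    ‖ξ‖ ^ 2 * ‖(𝓕⁻ f : 𝓢(E, ℂ)) ξ‖ ^ 2 + ‖o.rightAngleRotation ξ‖ ^ 2 *
      ‖(𝓕⁻ f : 𝓢(E, ℂ)) (o.rightAngleRotation ξ)‖ ^ 2 ≤ volume.real Ω * sobolevEnergy 1 f := by
  rcases eq_or_ne ξ 0 with rfl | hξ
  · simpa using mul_nonneg measureReal_nonneg (sobolevEnergy_nonneg 1 f)
  have bound := norm_pow_four_mul_norm_sq_fourierInv_le hΩ hf ξ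
  have bound_rotated := norm_pow_four_mul_norm_sq_fourierInv_le hΩ hf (o.rightAngleRotation ξ)
  rw [LinearIsometryEquiv.norm_map] at bound_rotated ⊢
  refine le_of_mul_le_mul_left ?_ (show 0 < 4 * Real.pi ^ 2 * ‖ξ‖ ^ 2 by positivity)
  linear_combination bound + bound_rotated +
    volume.real Ω * sobolevEnergy_zero_lineDerivOp_add_rightAngleRotation o f ξ

lemma sobolevEnergy_le_mul_sobolevEnergy_succ {k : ℕ} {C : ℝ} (hC : 0 ≤ C)
    (h : ∀ ξ, ‖ξ‖ ^ (2 * k) * ‖(𝓕⁻ f : 𝓢(E, ℂ)) ξ‖ ^ 2 + ‖o.rightAngleRotation ξ‖ ^ (2 * k) *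
      ‖(𝓕⁻ f : 𝓢(E, ℂ)) (o.rightAngleRotation ξ)‖ ^ 2 ≤ 2 * (C * sobolevEnergy k f)) :
    sobolevEnergy k f ≤ 2 * Real.pi * C * sobolevEnergy (k + 1) f := by
  have moment_eq (ξ : E) : ‖ξ‖ ^ 2 * (‖ξ‖ ^ (2 * k) * ‖(𝓕⁻ f : 𝓢(E, ℂ)) ξ‖ ^ 2) =
      ‖ξ‖ ^ (2 * (k + 1)) * ‖(𝓕⁻ f : 𝓢(E, ℂ)) ξ‖ ^ 2 := by ring
  have bound := sq_integral_le_mul_second_moment o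
    (fun ξ ↦ by positivity) (integrable_norm_pow_mul_norm_sq (𝓕⁻ f : 𝓢(E, ℂ)) (2 * k))
    (by simpa only [moment_eq] using integrable_norm_pow_mul_norm_sq (𝓕⁻ f : 𝓢(E, ℂ)) _) h
  simp only [moment_eq] at bound
  rw [← sobolevEnergy, ← sobolevEnergy] at bound
  rcases (sobolevEnergy_nonneg k f).eq_or_lt with energy_eq_zero | energy_pos
  · rw [← energy_eq_zero]
    exact mul_nonneg (by positivity) (sobolevEnergy_nonneg _ f)
  · refine le_of_mul_le_mul_left ?_ energy_pos
    linear_combination bound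

lemma nonempty_orientation (E : Type*) [NormedAddCommGroup E] [InnerProductSpace ℝ E]
    [Fact (Module.finrank ℝ E = 2)] : Nonempty (Orientation ℝ E (Fin 2)) :=
  ⟨((stdOrthonormalBasis ℝ E).reindex (finCongr Fact.out)).toBasis.orientation⟩

lemma sobolevEnergy_zero_le (hΩ : volume Ω ≠ ⊤) (hf : tsupport f ⊆ Ω) :
    sobolevEnergy 0 f ≤ 2 * Real.pi * volume.real Ω * sobolevEnergy 1 f := by
  obtain ⟨o⟩ := nonempty_orientation E
  refine sobolevEnergy_le_mul_sobolevEnergy_succ o measureReal_nonneg fun ξ ↦ ?_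
  have bound := sq_norm_fourierInv_le_measureReal_mul hΩ hf
  rw [← sobolevEnergy_zero] at bound
  linear_combination bound ξ + bound (o.rightAngleRotation ξ)

lemma sobolevEnergy_one_le (hΩ : volume Ω ≠ ⊤) (hf : tsupport f ⊆ Ω) :
    sobolevEnergy 1 f ≤ Real.pi * volume.real Ω * sobolevEnergy 2 f := by
  obtain ⟨o⟩ := nonempty_orientation E
  have bound := sobolevEnergy_le_mul_sobolevEnergy_succ o (f := f) (k := 1)
    (C := volume.real Ω / 2) (by positivity) fun ξ ↦ ?_
  · linear_combination bound
  · linear_combination norm_sq_mul_norm_sq_fourierInv_add_rightAngleRotation_le o hΩ hf ξ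

lemma integral_norm_sq_add_sq_mul_norm_sq_fourierInv_le (hΩ : volume Ω ≠ ⊤)
    (hf : tsupport f ⊆ Ω) {q : ℝ} (hq : 0 ≤ q) :
    ∫ ξ, ((‖ξ‖ ^ 2 + q) * ‖(𝓕⁻ f : 𝓢(E, ℂ)) ξ‖) ^ 2 ≤
      (1 + 2 * (Real.pi * volume.real Ω * q) + 2 * (Real.pi * volume.real Ω * q) ^ 2) *
        sobolevEnergy 2 f := by
  have expand : ∫ ξ, ((‖ξ‖ ^ 2 + q) * ‖(𝓕⁻ f : 𝓢(E, ℂ)) ξ‖) ^ 2 =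
      sobolevEnergy 2 f + 2 * q * sobolevEnergy 1 f + q ^ 2 * sobolevEnergy 0 f := by
    have integrable (c : ℝ) (k : ℕ) :=
      (integrable_norm_pow_mul_norm_sq (𝓕⁻ f : 𝓢(E, ℂ)) k).const_mul c
    have expand_pointwise (ξ : E) : ((‖ξ‖ ^ 2 + q) * ‖(𝓕⁻ f : 𝓢(E, ℂ)) ξ‖) ^ 2 =
        1 * (‖ξ‖ ^ (2 * 2) * ‖(𝓕⁻ f : 𝓢(E, ℂ)) ξ‖ ^ 2) +
          (2 * q * (‖ξ‖ ^ (2 * 1) * ‖(𝓕⁻ f : 𝓢(E, ℂ)) ξ‖ ^ 2) +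
            q ^ 2 * (‖ξ‖ ^ (2 * 0) * ‖(𝓕⁻ f : 𝓢(E, ℂ)) ξ‖ ^ 2)) := by ring
    simp only [expand_pointwise, sobolevEnergy]
    rw [integral_add (integrable _ _) (by exact (integrable _ _).add (integrable _ _)),
      integral_add (integrable _ _) (integrable _ _), integral_const_mul, integral_const_mul,
      integral_const_mul]
    ring
  have bound_one := sobolevEnergy_one_le hΩ hf
  rw [expand]
  linear_combination 2 * q * bound_one + q ^ 2 * sobolevEnergy_zero_le hΩ hf +
    2 * Real.pi * volume.real Ω * q ^ 2 * bound_one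

end Poincare

section JacobianBound

attribute [local instance] FiniteDimensional.of_fact_finrank_eq_two

variable {E : Type*} [NormedAddCommGroup E] [InnerProductSpace ℝ E]
  [Fact (Module.finrank ℝ E = 2)] [MeasurableSpace E] [BorelSpace E]

variable (b : OrthonormalBasis (Fin 2) ℝ E) {q : ℝ}

lemma enorm_fourierInv_jacobianDet_le (hq : 0 < q) (f g : 𝓢(E, ℂ)) (ξ : E) :
    ‖(𝓕⁻ (jacobianDet (b 0) (b 1) f g) : 𝓢(E, ℂ)) ξ‖ₑ ≤
      ∫⁻ t, ‖4 * Real.pi ^ 2 * (b.toBasis.orientation.areaForm t ξ /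
          ((‖t‖ ^ 2 + q) * (‖ξ - t‖ ^ 2 + q)))‖ₑ *
        (‖(‖t‖ ^ 2 + q) * ‖(𝓕⁻ f : 𝓢(E, ℂ)) t‖‖ₑ *
          ‖(‖ξ - t‖ ^ 2 + q) * ‖(𝓕⁻ g : 𝓢(E, ℂ)) (ξ - t)‖‖ₑ) := by
  rw [fourierInv_jacobianDet_apply]
  refine (enorm_integral_le_lintegral_enorm _).trans_eq ?_
  congr 1 with t
  rw [← areaForm_eq_of_orthonormalBasis]
  have weights_cancel : 4 * Real.pi ^ 2 * (b.toBasis.orientation.areaForm t ξ /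
      ((‖t‖ ^ 2 + q) * (‖ξ - t‖ ^ 2 + q))) * ((‖t‖ ^ 2 + q) * ‖(𝓕⁻ f : 𝓢(E, ℂ)) t‖ *
        ((‖ξ - t‖ ^ 2 + q) * ‖(𝓕⁻ g : 𝓢(E, ℂ)) (ξ - t)‖)) =
      4 * Real.pi ^ 2 * b.toBasis.orientation.areaForm t ξ *
        ‖(𝓕⁻ f : 𝓢(E, ℂ)) t * (𝓕⁻ g : 𝓢(E, ℂ)) (ξ - t)‖ := by
    rw [norm_mul]
    field_simp
  rw [← enorm_mul, ← enorm_mul, weights_cancel, enorm_eq_iff_norm_eq, norm_mul,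
    Complex.norm_real, neg_mul, norm_neg, norm_mul _ ‖_‖, norm_norm]

lemma integral_norm_sq_jacobianDet_le_mul (hq : 0 < q) (f g : 𝓢(E, ℂ)) :
    ∫ x, ‖jacobianDet (b 0) (b 1) f g x‖ ^ 2 ≤ 2 * Real.pi ^ 5 / q *
      ((∫ t, ((‖t‖ ^ 2 + q) * ‖(𝓕⁻ f : 𝓢(E, ℂ)) t‖) ^ 2) *
        ∫ t, ((‖t‖ ^ 2 + q) * ‖(𝓕⁻ g : 𝓢(E, ℂ)) t‖) ^ 2) := by
  let o := b.toBasis.orientation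
  have areaForm_continuous := continuous_areaForm_left o
  have kernel_bound (ξ : E) : ∫⁻ t, ‖4 * Real.pi ^ 2 *
      (o.areaForm t ξ / ((‖t‖ ^ 2 + q) * (‖ξ - t‖ ^ 2 + q)))‖ₑ ^ 2 ≤
      ENNReal.ofReal (2 * Real.pi ^ 5 / q) := by
    simp only [enorm_mul, mul_pow]
    rw [lintegral_const_mul' _ _ (by finiteness)]
    simp only [Real.enorm_eq_ofReal_abs, ← ENNReal.ofReal_pow (abs_nonneg _), sq_abs]
    refine (mul_le_mul_right (lintegral_areaForm_div_sq_le o hq ξ) _).trans_eq ?_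
    rw [← ENNReal.ofReal_mul (by positivity), ← ENNReal.ofReal_mul (by positivity)]
    congr 1
    field_simp
    norm_num
  have weighted_sq (h : 𝓢(E, ℂ)) : ∫⁻ t, ‖(‖t‖ ^ 2 + q) * ‖(𝓕⁻ h : 𝓢(E, ℂ)) t‖‖ₑ ^ 2 =
      ENNReal.ofReal (∫ t, ((‖t‖ ^ 2 + q) * ‖(𝓕⁻ h : 𝓢(E, ℂ)) t‖) ^ 2) := by
    simpa only [Real.norm_eq_abs, sq_abs] using
      lintegral_enorm_sq_eq_ofReal (memLp_norm_sq_add_mul_norm (𝓕⁻ h : 𝓢(E, ℂ)) q)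
  rw [← integral_norm_sq_fourierInv, ← ENNReal.ofReal_le_ofReal_iff (by positivity),
    ENNReal.ofReal_mul (by positivity), ENNReal.ofReal_mul (by positivity), ← weighted_sq,
    ← weighted_sq, ← lintegral_enorm_sq_eq_ofReal
      ((𝓕⁻ (jacobianDet (b 0) (b 1) f g) : 𝓢(E, ℂ)).memLp 2 volume)]
  refine (lintegral_mono fun ξ ↦
    pow_le_pow_left' (enorm_fourierInv_jacobianDet_le b hq f g ξ) 2).trans ?_
  exact lintegral_sq_bilinear_convolution_le (fun ξ ↦ by fun_prop) kernel_bound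
    (by fun_prop) (by fun_prop)

lemma integral_norm_sq_jacobianDet_le {Ω : Set E} (hΩ : volume Ω ≠ ⊤) {f g : 𝓢(E, ℂ)}
    (hf : tsupport f ⊆ Ω) (hg : tsupport g ⊆ Ω) :
    ∫ x, ‖jacobianDet (b 0) (b 1) f g x‖ ^ 2 ≤ volume.real Ω / Real.pi ^ 4 *
      ((∫ x, ‖(Δ f : 𝓢(E, ℂ)) x‖ ^ 2) * ∫ x, ‖(Δ g : 𝓢(E, ℂ)) x‖ ^ 2) := by
  rcases measureReal_nonneg.eq_or_lt with area_eq_zero | area_pos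
  · have volume_eq_zero : volume Ω = 0 := (measureReal_eq_zero_iff hΩ).1 area_eq_zero.symm
    rw [← setIntegral_eq_integral_of_forall_compl_eq_zero (s := tsupport f) fun x hx ↦ by
      simp [jacobianDet_eq_zero_of_notMem_tsupport _ _ _ hx], setIntegral_measure_zero _
      (measure_mono_null hf volume_eq_zero)]
    positivity
  have weighted_le {h : 𝓢(E, ℂ)} (hh : tsupport h ⊆ Ω) :
      ∫ t, ((‖t‖ ^ 2 + 1 / (4 * Real.pi * volume.real Ω)) * ‖(𝓕⁻ h : 𝓢(E, ℂ)) t‖) ^ 2 ≤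
        13 / 8 * sobolevEnergy 2 h := by
    refine (integral_norm_sq_add_sq_mul_norm_sq_fourierInv_le hΩ hh (by positivity)).trans_eq ?_
    field_simp
    ring
  have energy_nonneg := mul_nonneg (sobolevEnergy_nonneg 2 f) (sobolevEnergy_nonneg 2 g)
  calc ∫ x, ‖jacobianDet (b 0) (b 1) f g x‖ ^ 2
      ≤ 2 * Real.pi ^ 5 / (1 / (4 * Real.pi * volume.real Ω)) *
          ((13 / 8 * sobolevEnergy 2 f) * (13 / 8 * sobolevEnergy 2 g)) := by
        refine (integral_norm_sq_jacobianDet_le_mul b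
          (q := 1 / (4 * Real.pi * volume.real Ω)) (by positivity) f g).trans ?_
        exact mul_le_mul_of_nonneg_left (mul_le_mul (weighted_le hf) (weighted_le hg)
          (integral_nonneg fun _ ↦ sq_nonneg _)
          (mul_nonneg (by norm_num) (sobolevEnergy_nonneg 2 f))) (by positivity)
    _ = volume.real Ω * Real.pi ^ 4 * (169 / 8 * Real.pi ^ 2) *
          (sobolevEnergy 2 f * sobolevEnergy 2 g) := by
        field_simp
        ring
    _ ≤ volume.real Ω * Real.pi ^ 4 * 256 * (sobolevEnergy 2 f * sobolevEnergy 2 g) := by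
        gcongr
        nlinarith [Real.pi_lt_d2, Real.pi_pos]
    _ = volume.real Ω / Real.pi ^ 4 *
          ((∫ x, ‖(Δ f : 𝓢(E, ℂ)) x‖ ^ 2) * ∫ x, ‖(Δ g : 𝓢(E, ℂ)) x‖ ^ 2) := by
        rw [integral_norm_sq_laplacian, integral_norm_sq_laplacian]
        field_simp
        ring

end JacobianBound

section RealPart

variable {V : Type*} [NormedAddCommGroup V] [InnerProductSpace ℝ V] [FiniteDimensional ℝ V]
  [MeasurableSpace V] [BorelSpace V] {g : V → ℝ} {f : 𝓢(V, ℂ)}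

lemma memLp_two_of_schwartzMap_eq_ofReal (h : ∀ x, f x = g x) : MemLp g 2 := by
  have eq_re : g = fun x ↦ (f x).re := funext fun x ↦ by rw [h, Complex.ofReal_re]
  exact eq_re ▸ (f.memLp 2).re

lemma setIntegral_sq_le_integral_norm_sq (h : ∀ x, f x = g x) (s : Set V) :
    ∫ x in s, g x ^ 2 ≤ ∫ x, ‖f x‖ ^ 2 := by
  simp only [h, Complex.norm_real, Real.norm_eq_abs, sq_abs]
  exact setIntegral_le_integral (memLp_two_of_schwartzMap_eq_ofReal h).integrable_sq
    (ae_of_all _ fun _ ↦ sq_nonneg _)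

end RealPart

lemma hess2_nonneg (f : EuclideanSpace ℝ (Fin 2) → ℝ) (x : EuclideanSpace ℝ (Fin 2)) :
    0 ≤ hess2 f x :=
  Finset.sum_nonneg fun _ _ ↦ Finset.sum_nonneg fun _ _ ↦ sq_nonneg _

namespace IsTest

variable {Ω : Set (EuclideanSpace ℝ (Fin 2))} {w : EuclideanSpace ℝ (Fin 2) → ℝ}

protected lemma pd (hw : IsTest Ω w) (i : Fin 2) : IsTest Ω (pd w i) := by
  obtain ⟨smooth, compact_support, support_subset⟩ := hw
  exact ⟨(smooth.fderiv_right (by simp)).clm_apply contDiff_const,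
    compact_support.fderiv_apply ℝ _, (tsupport_fderiv_apply_subset ℝ _).trans support_subset⟩

lemma eq_zero_of_notMem (hw : IsTest Ω w) {x : EuclideanSpace ℝ (Fin 2)} (hx : x ∉ Ω) : w x = 0 :=
  image_eq_zero_of_notMem_tsupport fun h ↦ hx (hw.2.2 h)

/-- A real test function as a complex-valued Schwartz function, the form to which the Fourier
transform applies. -/
def toSchwartz (hw : IsTest Ω w) : 𝓢(EuclideanSpace ℝ (Fin 2), ℂ) :=
  (hw.2.1.comp_left Complex.ofReal_zero).toSchwartzMap (Complex.ofRealCLM.contDiff.comp hw.1)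

lemma toSchwartz_apply (hw : IsTest Ω w) (x : EuclideanSpace ℝ (Fin 2)) :
    hw.toSchwartz x = w x := rfl

lemma tsupport_toSchwartz_subset (hw : IsTest Ω w) : tsupport hw.toSchwartz ⊆ Ω :=
  (tsupport_comp_subset Complex.ofReal_zero w).trans hw.2.2

lemma lineDerivOp_toSchwartz (hw : IsTest Ω w) (i : Fin 2) :
    ∂_{EuclideanSpace.basisFun (Fin 2) ℝ i} hw.toSchwartz = (hw.pd i).toSchwartz := by
  ext x
  have hasFDerivAt := Complex.ofRealCLM.hasFDerivAt.comp x
    (hw.1.differentiable (by simp) x).hasFDerivAt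
  rw [SchwartzMap.lineDerivOp_apply_eq_fderiv, EuclideanSpace.basisFun_apply]
  exact DFunLike.congr_fun hasFDerivAt.fderiv _

lemma lineDerivOp_lineDerivOp_toSchwartz_apply (hw : IsTest Ω w) (i j : Fin 2)
    (x : EuclideanSpace ℝ (Fin 2)) :
    (∂_{EuclideanSpace.basisFun (Fin 2) ℝ i} (∂_{EuclideanSpace.basisFun (Fin 2) ℝ j}
      hw.toSchwartz) : 𝓢(EuclideanSpace ℝ (Fin 2), ℂ)) x = pd2 w i j x := by
  rw [lineDerivOp_toSchwartz, lineDerivOp_toSchwartz]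
  rfl

lemma laplacian_toSchwartz_apply (hw : IsTest Ω w) (x : EuclideanSpace ℝ (Fin 2)) :
    (Δ hw.toSchwartz : 𝓢(EuclideanSpace ℝ (Fin 2), ℂ)) x = lap w x := by
  simp only [SchwartzMap.laplacian_eq_sum (EuclideanSpace.basisFun (Fin 2) ℝ), Fin.sum_univ_two,
    add_apply, lineDerivOp_lineDerivOp_toSchwartz_apply, lap, Complex.ofReal_add]

lemma jacobianDet_toSchwartz_apply {φ : EuclideanSpace ℝ (Fin 2) → ℝ} (hφ : IsTest Ω φ)
    (hw : IsTest Ω w) (x : EuclideanSpace ℝ (Fin 2)) :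
    jacobianDet (EuclideanSpace.basisFun (Fin 2) ℝ 0) (EuclideanSpace.basisFun (Fin 2) ℝ 1)
      hφ.toSchwartz hw.toSchwartz x =
      (pd w 1 x * pd φ 0 x - pd w 0 x * pd φ 1 x : ℝ) := by
  simp only [jacobianDet_apply, lineDerivOp_toSchwartz, toSchwartz_apply]
  push_cast
  ring

lemma setIntegral_hess2 (hw : IsTest Ω w) :
    ∫ x in Ω, hess2 w x =
      ∫ x, ‖(Δ hw.toSchwartz : 𝓢(EuclideanSpace ℝ (Fin 2), ℂ)) x‖ ^ 2 := by
  let b := EuclideanSpace.basisFun (Fin 2) ℝ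
  have hess2_eq_zero (x : EuclideanSpace ℝ (Fin 2)) (hx : x ∉ Ω) : hess2 w x = 0 := by
    have pd2_eq_zero (i j : Fin 2) : pd2 w i j x = 0 := ((hw.pd j).pd i).eq_zero_of_notMem hx
    simp [hess2, pd2_eq_zero]
  have pd2_sq_integrable (i j : Fin 2) : Integrable fun x ↦ pd2 w i j x ^ 2 :=
    (memLp_two_of_schwartzMap_eq_ofReal
      (hw.lineDerivOp_lineDerivOp_toSchwartz_apply i j)).integrable_sq
  calc ∫ x in Ω, hess2 w x = ∑ i, ∑ j, ∫ x, pd2 w i j x ^ 2 := by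
        rw [setIntegral_eq_integral_of_forall_compl_eq_zero hess2_eq_zero]
        simp only [hess2]
        rw [integral_finsetSum _ fun i _ ↦ integrable_finsetSum _ fun j _ ↦ pd2_sq_integrable i j]
        simp only [integral_finsetSum _ fun j _ ↦ pd2_sq_integrable _ j]
    _ = ∑ j, ∑ i, sobolevEnergy 0 (∂_{b i} (∂_{b j} hw.toSchwartz)) := by
        rw [Finset.sum_comm]
        simp only [b, sobolevEnergy_zero, lineDerivOp_lineDerivOp_toSchwartz_apply,
          Complex.norm_real, Real.norm_eq_abs, sq_abs]
    _ = 16 * Real.pi ^ 4 * sobolevEnergy 2 hw.toSchwartz := by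
        simp only [sum_sobolevEnergy_lineDerivOp, ← Finset.mul_sum]
        ring
    _ = ∫ x, ‖(Δ hw.toSchwartz : 𝓢(EuclideanSpace ℝ (Fin 2), ℂ)) x‖ ^ 2 :=
        (integral_norm_sq_laplacian _).symm

end IsTest

theorem Gam_bound_general (Ω : Set (EuclideanSpace ℝ (Fin 2))) (hΩ : volume Ω ≠ ⊤)
    (v w φ : EuclideanSpace ℝ (Fin 2) → ℝ)
    (hv : IsTest Ω v) (hw : IsTest Ω w) (hφ : IsTest Ω φ) :
    |Gam Ω v w φ| ≤ Real.sqrt (volume Ω).toReal / Real.pi ^ 2 *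
      (Real.sqrt (∫ x in Ω, hess2 v x) * Real.sqrt (∫ x in Ω, hess2 w x) *
        Real.sqrt (∫ x in Ω, hess2 φ x)) := by
  have : Fact (Module.finrank ℝ (EuclideanSpace ℝ (Fin 2)) = 2) := ⟨finrank_euclideanSpace_fin⟩
  have lap_eq := hv.laplacian_toSchwartz_apply
  have jacobian_eq := hφ.jacobianDet_toSchwartz_apply hw
  have jacobian_bound := integral_norm_sq_jacobianDet_le (EuclideanSpace.basisFun (Fin 2) ℝ) hΩ
    hφ.tsupport_toSchwartz_subset hw.tsupport_toSchwartz_subset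
  rw [← hφ.setIntegral_hess2, ← hw.setIntegral_hess2] at jacobian_bound
  have lap_bound := setIntegral_sq_le_integral_norm_sq lap_eq Ω
  rw [← hv.setIntegral_hess2] at lap_bound
  calc |Gam Ω v w φ|
      ≤ √(∫ x in Ω, lap v x ^ 2) * √(∫ x in Ω, (pd w 1 x * pd φ 0 x - pd w 0 x * pd φ 1 x) ^ 2) :=
        abs_integral_mul_le_sqrt_mul_sqrt
          ((memLp_two_of_schwartzMap_eq_ofReal lap_eq).restrict Ω)
          ((memLp_two_of_schwartzMap_eq_ofReal jacobian_eq).restrict Ω)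
    _ ≤ √(∫ x in Ω, hess2 v x) * √((volume Ω).toReal / Real.pi ^ 4 *
          ((∫ x in Ω, hess2 φ x) * ∫ x in Ω, hess2 w x)) := by
        gcongr
        exact (setIntegral_sq_le_integral_norm_sq jacobian_eq Ω).trans jacobian_bound
    _ = √(volume Ω).toReal / Real.pi ^ 2 * (√(∫ x in Ω, hess2 v x) * √(∫ x in Ω, hess2 w x) *
          √(∫ x in Ω, hess2 φ x)) := by
        have sqrt_pi_pow_four : √(Real.pi ^ 4) = Real.pi ^ 2 :=
          by
          rw [show Real.pi ^ 4 = (Real.pi ^ 2) ^ 2 by ring, Real.sqrt_sq (by positivity)]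
        rw [Real.sqrt_mul (by positivity), Real.sqrt_div' _ (by positivity),
          Real.sqrt_mul (integral_nonneg fun x ↦ hess2_nonneg φ x), sqrt_pi_pow_four]
        ring

/-- `|Γ(v,w,φ)| ≤ (|Ω|^{1/2}/π²) ‖D²v‖ ‖D²w‖ ‖D²φ‖`. -/
theorem Gam_bound (Ω : Set (EuclideanSpace ℝ (Fin 2))) (hΩ : IsOpen Ω)
    (hbdd : Bornology.IsBounded Ω)
    (v w φ : EuclideanSpace ℝ (Fin 2) → ℝ)
    (hv : IsTest Ω v) (hw : IsTest Ω w) (hφ : IsTest Ω φ) :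
    |Gam Ω v w φ| ≤ Real.sqrt (volume Ω).toReal / Real.pi ^ 2 *
      (Real.sqrt (∫ x in Ω, hess2 v x) * Real.sqrt (∫ x in Ω, hess2 w x) *
        Real.sqrt (∫ x in Ω, hess2 φ x)) :=
  Gam_bound_general Ω hbdd.measure_lt_top.ne v w φ hv hw hφ

end
end
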